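/- arXiv:1509.02251 — 2 statements merged into one kernel-verified Lean document; each statement's English description precedes it below -/
import Mathlib

section
/- Let φ be the Gaussian free field on the (d+1)-regular tree, d ≥ 2, and let h_* be the unique real number with λ_{h_*} = 1 (where λ_h = ‖π_h(dQ_{log d})π_h‖ on L²(N(0, d/(d²−1)))). Then for h < h_*, P^G-a.s. the level set {x : φ_x ≥ h} has an infinite connected component, while for h > h_*, P^G-a.s. all connected components of {x : φ_x ≥ h} are finite. -/
open MeasureTheory ProbabilityTheory

namespace TreeGFF

open scoped ENNReal NNReal

/-- A symmetric probability density `K` with respect to `ν ⊗ ν`, dominated by a square-integrable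
locally bounded product `κ ⊗ κ` and bounded below on compact sets. -/
structure IsSymmDensity (ν : Measure ℝ) (K : ℝ → ℝ → ℝ≥0∞) : Prop where
  measurable : Measurable (Function.uncurry K)
  symm : ∀ a z, K a z = K z a
  lintegral_eq_one : ∀ a, ∫⁻ z, K a z ∂ν = 1
  exists_dominating : ∃ κ : ℝ → ℝ≥0∞, Measurable κ ∧ ∫⁻ z, κ z ^ 2 ∂ν ≠ ∞ ∧
    (∀ a z, K a z ≤ κ a * κ z) ∧ ∀ R : ℝ, ∃ C : ℝ≥0∞, C ≠ ∞ ∧ ∀ z, |z| ≤ R → κ z ≤ C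
  exists_pos_le : ∀ R : ℝ, ∃ c : ℝ≥0∞, c ≠ 0 ∧ ∀ a z, |a| ≤ R → |z| ≤ R → c ≤ K a z

/-- The integral operator on nonnegative functions with kernel `K`. -/
noncomputable def transOp (ν : Measure ℝ) (K : ℝ → ℝ → ℝ≥0∞) (f : ℝ → ℝ≥0∞) (a : ℝ) : ℝ≥0∞ :=
  ∫⁻ z, K a z * f z ∂ν

/-- The one-vertex marginal of the Gaussian free field on the `(d+1)`-regular tree. -/
noncomputable def siteLaw (d : ℕ) : Measure ℝ :=
  gaussianReal 0 (Real.toNNReal ((d : ℝ) / ((d : ℝ) ^ 2 - 1)))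

/-- The density of the transition kernel `a ↦ N(a/d, 1/d)` with respect to `siteLaw d`. -/
noncomputable def mehler (d : ℕ) (a z : ℝ) : ℝ≥0∞ :=
  ENNReal.ofReal (d / √((d : ℝ) ^ 2 - 1) * Real.exp (a * z - (a ^ 2 + z ^ 2) / (2 * d)))

instance (d : ℕ) : IsProbabilityMeasure (siteLaw d) := by
  unfold siteLaw; infer_instance

lemma siteVar_pos {d : ℕ} (hd : 2 ≤ d) : 0 < (d : ℝ) / ((d : ℝ) ^ 2 - 1) := by
  have : (2 : ℝ) ≤ d := by exact_mod_cast hd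
  apply div_pos <;> nlinarith

lemma siteVar_ne_zero {d : ℕ} (hd : 2 ≤ d) :
    Real.toNNReal ((d : ℝ) / ((d : ℝ) ^ 2 - 1)) ≠ 0 := by
  simpa using siteVar_pos hd

lemma measurable_mehler (d : ℕ) : Measurable (Function.uncurry (mehler d)) := by
  unfold Function.uncurry mehler
  fun_prop

lemma mehler_mul_pdf {d : ℕ} (hd : 2 ≤ d) (a z : ℝ) :
    mehler d a z * gaussianPDF 0 (Real.toNNReal ((d : ℝ) / ((d : ℝ) ^ 2 - 1))) z =
      gaussianPDF (a / d) (Real.toNNReal (1 / d)) z := by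
  have h2 : (2 : ℝ) ≤ d := by exact_mod_cast hd
  have hD : 0 < (d : ℝ) ^ 2 - 1 := by nlinarith
  have hd0 : 0 < (d : ℝ) := by linarith
  rw [mehler, gaussianPDF, gaussianPDF, ← ENNReal.ofReal_mul (by positivity)]
  congr 1
  rw [gaussianPDFReal, gaussianPDFReal, Real.coe_toNNReal _ (by positivity),
    Real.coe_toNNReal _ (by positivity)]
  have e1 : √(2 * Real.pi * (d / ((d : ℝ) ^ 2 - 1))) =
      √(2 * Real.pi * (1 / d)) * (d / √((d : ℝ) ^ 2 - 1)) := by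
    have : (d : ℝ) / √((d : ℝ) ^ 2 - 1) = √((d : ℝ) ^ 2 / ((d : ℝ) ^ 2 - 1)) := by
      rw [Real.sqrt_div (by positivity), Real.sqrt_sq hd0.le]
    rw [this, ← Real.sqrt_mul (by positivity)]
    congr 1
    field_simp
  rw [e1, mul_inv]
  have hs : 0 < √((d : ℝ) ^ 2 - 1) := Real.sqrt_pos.2 hD
  have hs2 : 0 < √(2 * Real.pi * (1 / d)) := by positivity
  have e2 : Real.exp (-(z - a / d) ^ 2 / (2 * (1 / d))) =
      Real.exp (a * z - (a ^ 2 + z ^ 2) / (2 * d)) *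
        Real.exp (-(z - 0) ^ 2 / (2 * (d / ((d : ℝ) ^ 2 - 1)))) := by
    rw [← Real.exp_add]
    congr 1
    field_simp
    ring
  rw [e2]
  field_simp

lemma transOp_mehler {d : ℕ} (hd : 2 ≤ d) {f : ℝ → ℝ≥0∞} (hf : Measurable f) (a : ℝ) :
    transOp (siteLaw d) (mehler d) f a =
      ∫⁻ x, f x ∂gaussianReal (a / d) (Real.toNNReal (1 / d)) := by
  have hd0 : (0 : ℝ) < d := by positivity
  have hv : Real.toNNReal (1 / (d : ℝ)) ≠ 0 := by simpa using by omega
  have hm : Measurable fun z => mehler d a z :=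
    (measurable_mehler d).comp (measurable_const.prodMk measurable_id)
  rw [transOp, siteLaw, gaussianReal_of_var_ne_zero _ (siteVar_ne_zero hd),
    gaussianReal_of_var_ne_zero _ hv]
  change ∫⁻ z, ((fun z => mehler d a z) * f) z ∂_ = _
  rw [lintegral_withDensity_eq_lintegral_mul _ (measurable_gaussianPDF _ _) (hm.mul hf),
    lintegral_withDensity_eq_lintegral_mul _ (measurable_gaussianPDF _ _) hf]
  refine lintegral_congr fun z => ?_
  simp only [Pi.mul_apply]
  rw [← mehler_mul_pdf hd a z]
  ring

lemma lintegral_const_add_gaussian {d : ℕ} (hd : 2 ≤ d) {f : ℝ → ℝ≥0∞} (hf : Measurable f)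
    (a : ℝ) : ∫⁻ x, f (a / d + x) ∂gaussianReal 0 (Real.toNNReal (1 / d)) =
      transOp (siteLaw d) (mehler d) f a := by
  rw [transOp_mehler hd hf, ← lintegral_map hf (by fun_prop : Measurable fun x => a / d + x),
    gaussianReal_map_const_add, zero_add]

lemma map_siteLaw {d : ℕ} (hd : 2 ≤ d) (a : ℝ) :
    (siteLaw d).map (fun y => a / d + √(1 - 1 / (d : ℝ) ^ 2) * y) =
      gaussianReal (a / d) (Real.toNNReal (1 / d)) := by
  have h2 : (2 : ℝ) ≤ d := by exact_mod_cast hd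
  have hD : 0 < (d : ℝ) ^ 2 - 1 := by nlinarith
  have hd0 : 0 < (d : ℝ) := by linarith
  have : (fun y : ℝ => a / d + √(1 - 1 / (d : ℝ) ^ 2) * y) =
      (fun x => a / d + x) ∘ (fun y => √(1 - 1 / (d : ℝ) ^ 2) * y) := rfl
  rw [this, ← Measure.map_map (by fun_prop) (by fun_prop), siteLaw, gaussianReal_map_const_mul,
    gaussianReal_map_const_add]
  congr 1
  · simp
  · ext
    have : 0 ≤ 1 - 1 / (d : ℝ) ^ 2 := by
      rw [sub_nonneg, div_le_one (by positivity)]; nlinarith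
    simp only [NNReal.coe_mul, NNReal.coe_mk]
    rw [Real.sq_sqrt this, Real.coe_toNNReal _ (by positivity), Real.coe_toNNReal _ (by positivity)]
    field_simp

lemma isSymmDensity_mehler {d : ℕ} (hd : 2 ≤ d) : IsSymmDensity (siteLaw d) (mehler d) := by
  have h2 : (2 : ℝ) ≤ d := by exact_mod_cast hd
  have hD : 0 < (d : ℝ) ^ 2 - 1 := by nlinarith
  have hd0 : 0 < (d : ℝ) := by linarith
  have hc : 0 < d / √((d : ℝ) ^ 2 - 1) := div_pos hd0 (Real.sqrt_pos.2 hD)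
  set c := d / √((d : ℝ) ^ 2 - 1) with hcdef
  refine ⟨measurable_mehler d, fun a z => ?_, fun a => ?_, ?_, fun R => ?_⟩
  · rw [mehler, mehler, mul_comm a z, add_comm (a ^ 2)]
  · have := transOp_mehler hd (f := fun _ => 1) measurable_const a
    simpa [transOp] using this
  · refine ⟨fun z => ENNReal.ofReal (√c * Real.exp ((1 - 1 / d) / 2 * z ^ 2)), by fun_prop, ?_,
      fun a z => ?_, fun R => ⟨ENNReal.ofReal (√c * Real.exp ((1 - 1 / d) / 2 * R ^ 2)),
        ENNReal.ofReal_ne_top, fun z hz => ?_⟩⟩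
    · rw [siteLaw, gaussianReal_of_var_ne_zero _ (siteVar_ne_zero hd),
        lintegral_withDensity_eq_lintegral_mul _ (measurable_gaussianPDF _ _) (by fun_prop)]
      have hb : 0 < ((d : ℝ) - 1) ^ 2 / (2 * d) := by
        have : 0 < (d : ℝ) - 1 := by linarith
        positivity
      have hi := ((integrable_exp_neg_mul_sq hb).const_mul
        (c * (√(2 * Real.pi * (d / ((d : ℝ) ^ 2 - 1))))⁻¹)).lintegral_lt_top
      refine ne_of_lt (lt_of_le_of_lt (le_of_eq ?_) hi)
      refine lintegral_congr fun z => ?_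
      simp only [Pi.mul_apply, gaussianPDF, gaussianPDFReal]
      rw [← ENNReal.ofReal_pow (by positivity), ← ENNReal.ofReal_mul (by positivity),
        Real.coe_toNNReal _ (by positivity), mul_pow, Real.sq_sqrt hc.le, ← Real.exp_nat_mul]
      congr 1
      have : Real.exp (-(((d : ℝ) - 1) ^ 2 / (2 * d)) * z ^ 2) =
          Real.exp (-(z - 0) ^ 2 / (2 * (d / ((d : ℝ) ^ 2 - 1)))) *
            Real.exp (((2 : ℕ) : ℝ) * ((1 - 1 / d) / 2 * z ^ 2)) := by
        rw [← Real.exp_add]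
        congr 1
        field_simp
        push_cast
        ring
      rw [this]
      ring
    · rw [mehler, ← hcdef, ← ENNReal.ofReal_mul (by positivity)]
      apply ENNReal.ofReal_le_ofReal
      have e : √c * Real.exp ((1 - 1 / d) / 2 * a ^ 2) * (√c * Real.exp ((1 - 1 / d) / 2 * z ^ 2)) =
          c * Real.exp ((1 - 1 / d) / 2 * a ^ 2 + (1 - 1 / d) / 2 * z ^ 2) := by
        rw [Real.exp_add, mul_mul_mul_comm, Real.mul_self_sqrt hc.le]
      rw [e]
      gcongr
      have : (a ^ 2 + z ^ 2) / (2 * d) = 1 / d * ((a ^ 2 + z ^ 2) / 2) := by field_simp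
      rw [this]
      nlinarith [sq_nonneg (a - z)]
    · apply ENNReal.ofReal_le_ofReal
      have h1 : 1 / (d : ℝ) ≤ 1 := by rw [div_le_one hd0]; linarith
      have h3 : z ^ 2 ≤ R ^ 2 := sq_le_sq' (by linarith [neg_abs_le z]) (by linarith [le_abs_self z])
      gcongr
  · refine ⟨ENNReal.ofReal (c * Real.exp (-(R ^ 2) - (R ^ 2 + R ^ 2) / (2 * d))), ?_,
      fun a z ha hz => ?_⟩
    · simp only [ne_eq, ENNReal.ofReal_eq_zero, not_le]
      positivity
    · apply ENNReal.ofReal_le_ofReal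
      rw [← hcdef]
      have h1 : a ^ 2 ≤ R ^ 2 := sq_le_sq' (by linarith [neg_abs_le a]) (by linarith [le_abs_self a])
      have h3 : z ^ 2 ≤ R ^ 2 := sq_le_sq' (by linarith [neg_abs_le z]) (by linarith [le_abs_self z])
      gcongr
      nlinarith [sq_nonneg (a + z)]

lemma isOpenPosMeasure_siteLaw {d : ℕ} (hd : 2 ≤ d) : (siteLaw d).IsOpenPosMeasure :=
  (gaussianReal_absolutelyContinuous' 0 (siteVar_ne_zero hd)).isOpenPosMeasure

section Operator

variable {ν : Measure ℝ} {K : ℝ → ℝ → ℝ≥0∞}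

/-- The operator `f ↦ 1_I c K (1_I f)` on nonnegative functions. -/
noncomputable def cutOp (ν : Measure ℝ) (K : ℝ → ℝ → ℝ≥0∞) (c : ℝ≥0∞) (I : Set ℝ)
    (f : ℝ → ℝ≥0∞) : ℝ → ℝ≥0∞ :=
  I.indicator fun a => c * transOp ν K (I.indicator f) a

lemma IsSymmDensity.measurable_right (hK : IsSymmDensity ν K) (a : ℝ) : Measurable (K a) :=
  hK.measurable.comp (measurable_const.prodMk measurable_id)

lemma IsSymmDensity.measurable_mul (hK : IsSymmDensity ν K) (a : ℝ) {f : ℝ → ℝ≥0∞}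
    (hf : Measurable f) : Measurable fun z => K a z * f z :=
  (hK.measurable_right a).mul hf

lemma measurable_transOp [SFinite ν] (hK : IsSymmDensity ν K) {f : ℝ → ℝ≥0∞} (hf : Measurable f) :
    Measurable (transOp ν K f) := by
  have : Measurable (Function.uncurry fun a z => K a z * f z) :=
    hK.measurable.mul (hf.comp measurable_snd)
  exact this.lintegral_prod_right'

lemma transOp_mono {f g : ℝ → ℝ≥0∞} (h : ∀ z, f z ≤ g z) (a : ℝ) :
    transOp ν K f a ≤ transOp ν K g a :=
  lintegral_mono fun z => mul_le_mul_right (h z) _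

lemma transOp_le_one (hK : IsSymmDensity ν K) {f : ℝ → ℝ≥0∞} (h : ∀ z, f z ≤ 1) (a : ℝ) :
    transOp ν K f a ≤ 1 := by
  refine (transOp_mono h a).trans ?_
  simp [transOp, hK.lintegral_eq_one]

lemma transOp_const_mul (r : ℝ≥0∞) (hr : r ≠ ∞) (f : ℝ → ℝ≥0∞) (a : ℝ) :
    transOp ν K (fun z => r * f z) a = r * transOp ν K f a := by
  rw [transOp, transOp, ← lintegral_const_mul' _ _ hr]
  exact lintegral_congr fun z => mul_left_comm _ _ _

lemma lintegral_mul_transOp [SFinite ν] (hK : IsSymmDensity ν K) {f g : ℝ → ℝ≥0∞}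
    (hf : Measurable f) (hg : Measurable g) :
    ∫⁻ a, f a * transOp ν K g a ∂ν = ∫⁻ a, transOp ν K f a * g a ∂ν := by
  have e1 : ∀ a, f a * transOp ν K g a = ∫⁻ z, f a * (K a z * g z) ∂ν := fun a => by
    rw [transOp, lintegral_const_mul _ (hK.measurable_mul a hg)]
  have e2 : ∀ z, transOp ν K f z * g z = ∫⁻ a, f a * (K a z * g z) ∂ν := fun z => by
    rw [transOp, ← lintegral_mul_const _ (hK.measurable_mul z hf)]
    exact lintegral_congr fun a => by rw [hK.symm z a]; ring
  simp_rw [e1, e2]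
  refine lintegral_lintegral_swap (Measurable.aemeasurable ?_)
  exact (hf.comp measurable_fst).mul (hK.measurable.mul (hg.comp measurable_snd))

lemma lintegral_transOp [SFinite ν] (hK : IsSymmDensity ν K) {f : ℝ → ℝ≥0∞}
    (hf : Measurable f) : ∫⁻ a, transOp ν K f a ∂ν = ∫⁻ a, f a ∂ν := by
  have := lintegral_mul_transOp hK (measurable_const (a := (1 : ℝ≥0∞))) hf
  simpa [transOp, hK.lintegral_eq_one] using this

lemma measurable_cutOp [SFinite ν] (hK : IsSymmDensity ν K) (c : ℝ≥0∞) {I : Set ℝ}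
    (hI : MeasurableSet I) {f : ℝ → ℝ≥0∞} (hf : Measurable f) : Measurable (cutOp ν K c I f) :=
  ((measurable_transOp hK (hf.indicator hI)).const_mul c).indicator hI

lemma cutOp_mono (c : ℝ≥0∞) (I : Set ℝ) {f g : ℝ → ℝ≥0∞} (h : ∀ z, f z ≤ g z) (a : ℝ) :
    cutOp ν K c I f a ≤ cutOp ν K c I g a := by
  unfold cutOp
  refine Set.indicator_le_indicator ?_
  gcongr
  exact transOp_mono (fun z => Set.indicator_le_indicator (h z)) a

lemma cutOp_le (c : ℝ≥0∞) (I : Set ℝ) (f : ℝ → ℝ≥0∞) (a : ℝ) :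
    cutOp ν K c I f a ≤ c * transOp ν K f a := by
  unfold cutOp
  refine (Set.indicator_le_self _ _ _).trans ?_
  gcongr
  exact transOp_mono (fun z => Set.indicator_le_self _ _ _) a

lemma cutOp_const_mul (c : ℝ≥0∞) (I : Set ℝ) (r : ℝ≥0∞) (hr : r ≠ ∞) (f : ℝ → ℝ≥0∞) (a : ℝ) :
    cutOp ν K c I (fun z => r * f z) a = r * cutOp ν K c I f a := by
  have : (I.indicator fun z => r * f z) = fun z => r * I.indicator f z := by
    ext z; by_cases hz : z ∈ I <;> simp [hz]
  unfold cutOp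
  rw [this]
  by_cases ha : a ∈ I
  · simp only [ha, Set.indicator_of_mem, transOp_const_mul r hr]
    ring
  · simp [ha]

lemma lintegral_mul_cutOp [SFinite ν] (hK : IsSymmDensity ν K) (c : ℝ≥0∞) {I : Set ℝ}
    (hI : MeasurableSet I) {f g : ℝ → ℝ≥0∞} (hf : Measurable f) (hg : Measurable g) :
    ∫⁻ a, f a * cutOp ν K c I g a ∂ν = ∫⁻ a, cutOp ν K c I f a * g a ∂ν := by
  have e1 : ∀ a, f a * cutOp ν K c I g a =
      c * (I.indicator f a * transOp ν K (I.indicator g) a) := fun a => by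
    by_cases ha : a ∈ I
    · simp only [cutOp, ha, Set.indicator_of_mem]; ring
    · simp [cutOp, ha]
  have e2 : ∀ a, cutOp ν K c I f a * g a =
      c * (transOp ν K (I.indicator f) a * I.indicator g a) := fun a => by
    by_cases ha : a ∈ I
    · simp only [cutOp, ha, Set.indicator_of_mem]; ring
    · simp [cutOp, ha]
  simp_rw [e1, e2]
  rw [lintegral_const_mul, lintegral_const_mul,
    lintegral_mul_transOp hK (hf.indicator hI) (hg.indicator hI)]
  · exact (measurable_transOp hK (hf.indicator hI)).mul (hg.indicator hI)
  · exact (hf.indicator hI).mul (measurable_transOp hK (hg.indicator hI))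

lemma measurable_iterate_cutOp [SFinite ν] (hK : IsSymmDensity ν K) (c : ℝ≥0∞) {I : Set ℝ}
    (hI : MeasurableSet I) {f : ℝ → ℝ≥0∞} (hf : Measurable f) (n : ℕ) :
    Measurable ((cutOp ν K c I)^[n] f) := by
  induction n with
  | zero => exact hf
  | succ n ih => rw [Function.iterate_succ_apply']; exact measurable_cutOp hK c hI ih

lemma iterate_cutOp_mono (c : ℝ≥0∞) (I : Set ℝ) {f g : ℝ → ℝ≥0∞} (h : ∀ z, f z ≤ g z) (n : ℕ)
    (a : ℝ) : (cutOp ν K c I)^[n] f a ≤ (cutOp ν K c I)^[n] g a := by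
  induction n generalizing a with
  | zero => exact h a
  | succ n ih => simp only [Function.iterate_succ_apply']; exact cutOp_mono c I ih a

lemma iterate_cutOp_const_mul (c : ℝ≥0∞) (I : Set ℝ) (r : ℝ≥0∞) (hr : r ≠ ∞) (f : ℝ → ℝ≥0∞)
    (n : ℕ) : (cutOp ν K c I)^[n] (fun z => r * f z) = fun z => r * (cutOp ν K c I)^[n] f z := by
  induction n with
  | zero => rfl
  | succ n ih =>
    simp only [Function.iterate_succ_apply', ih]
    ext a
    exact cutOp_const_mul c I r hr _ a

lemma lintegral_mul_iterate_cutOp [SFinite ν] (hK : IsSymmDensity ν K) (c : ℝ≥0∞) {I : Set ℝ}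
    (hI : MeasurableSet I) {f g : ℝ → ℝ≥0∞} (hf : Measurable f) (hg : Measurable g) (n : ℕ) :
    ∫⁻ a, f a * (cutOp ν K c I)^[n] g a ∂ν = ∫⁻ a, (cutOp ν K c I)^[n] f a * g a ∂ν := by
  induction n generalizing f with
  | zero => rfl
  | succ n ih =>
    rw [Function.iterate_succ_apply', lintegral_mul_cutOp hK c hI hf
      (measurable_iterate_cutOp hK c hI hg n), ih (measurable_cutOp hK c hI hf),
      ← Function.iterate_succ_apply]

lemma sq_lintegral_mul_le {f g : ℝ → ℝ≥0∞} (hf : Measurable f) (hg : Measurable g) :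
    (∫⁻ a, f a * g a ∂ν) ^ 2 ≤ (∫⁻ a, f a ^ 2 ∂ν) * ∫⁻ a, g a ^ 2 ∂ν := by
  have h := ENNReal.lintegral_mul_le_Lp_mul_Lq ν Real.HolderConjugate.two_two hf.aemeasurable
    hg.aemeasurable
  simp only [Pi.mul_apply] at h
  have hsq : ∀ x : ℝ≥0∞, (x ^ ((1 : ℝ) / 2)) ^ 2 = x := fun x => by
    rw [← ENNReal.rpow_natCast, ← ENNReal.rpow_mul]; norm_num
  calc _ ≤ _ := pow_le_pow_left' h 2
    _ = _ := by
      rw [mul_pow, hsq, hsq]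
      simp only [← ENNReal.rpow_natCast, Nat.cast_ofNat]

end Operator

section Gain

open Filter Topology

variable {ν : Measure ℝ} {K : ℝ → ℝ → ℝ≥0∞}

lemma exists_setLIntegral_abs_gt_le {f : ℝ → ℝ≥0∞} [IsFiniteMeasure ν]
    (hfin : ∫⁻ z, f z ∂ν ≠ ∞) {ε : ℝ≥0∞} (hε : ε ≠ 0) (R₀ : ℝ) :
    ∃ R : ℝ, R₀ ≤ R ∧ ∫⁻ z in {z | R < |z|}, f z ∂ν ≤ ε := by
  have hlim : Tendsto (fun n : ℕ => ν {z : ℝ | (n : ℝ) < |z|}) atTop (𝓝 0) := by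
    have h0 : (⋂ n : ℕ, {z : ℝ | (n : ℝ) < |z|}) = ∅ := by
      ext z
      simp only [Set.mem_iInter, Set.mem_ofPred_eq, Set.mem_empty_iff_false, iff_false, not_forall,
        not_lt]
      exact exists_nat_ge _
    have := tendsto_measure_iInter_atTop (μ := ν) (s := fun n : ℕ => {z : ℝ | (n : ℝ) < |z|})
      (fun n => (measurableSet_lt measurable_const (by fun_prop)).nullMeasurableSet)
      (fun m n hmn z (hz : (n : ℝ) < |z|) =>
        show (m : ℝ) < |z| from lt_of_le_of_lt (by exact_mod_cast hmn) hz)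
      ⟨0, measure_ne_top _ _⟩
    rwa [h0, measure_empty] at this
  have h2 := tendsto_setLIntegral_zero hfin hlim
  have h3 : ∀ᶠ n : ℕ in atTop, ∫⁻ z in {z | (n : ℝ) < |z|}, f z ∂ν ≤ ε :=
    h2.eventually (ge_mem_nhds (pos_iff_ne_zero.2 hε))
  obtain ⟨n, hn, hn'⟩ := (h3.and (eventually_ge_atTop ⌈R₀⌉₊)).exists
  exact ⟨n, (Nat.le_ceil _).trans (by exact_mod_cast hn'), hn⟩

/-- Functions whose image under `K` is not small have a definite amount of mass on a fixed
compact set. -/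
lemma exists_le_sq_setLIntegral [IsProbabilityMeasure ν] (hK : IsSymmDensity ν K)
    {ε : ℝ≥0∞} (hε : ε ≠ 0) (hε' : ε ≠ ∞) (R₀ : ℝ) :
    ∃ R : ℝ, R₀ ≤ R ∧ ∃ δ : ℝ≥0∞, δ ≠ 0 ∧ ∀ (g : ℝ → ℝ≥0∞) (N : ℝ≥0∞), Measurable g → N ≠ ∞ →
      ∫⁻ z, g z ^ 2 ∂ν ≤ N → ε * N ≤ ∫⁻ a, transOp ν K g a ^ 2 ∂ν →
      δ * N ≤ (∫⁻ z in {z | |z| ≤ R}, g z ∂ν) ^ 2 := by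
  obtain ⟨κ, hκm, hκ2, hκ, hκR⟩ := hK.exists_dominating
  set D := ∫⁻ z, κ z ^ 2 ∂ν with hD
  have hε2 : ε / 2 ≠ 0 := by simp [hε]
  obtain ⟨R, hR₀, hR⟩ := exists_setLIntegral_abs_gt_le (ν := ν) hκ2
    (ε := ε / 2 / (2 * D)) (ENNReal.div_ne_zero.2 ⟨hε2, ENNReal.mul_ne_top (by simp) hκ2⟩) R₀
  obtain ⟨C, hC, hCR⟩ := hκR R
  refine ⟨R, hR₀, ε / 2 / (2 * D * C ^ 2), ENNReal.div_ne_zero.2 ⟨hε2,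
    ENNReal.mul_ne_top (ENNReal.mul_ne_top (by simp) hκ2) (ENNReal.pow_ne_top hC)⟩,
    fun g N hg hgfin hgN hle => ?_⟩
  set S := ∫⁻ z in {z | |z| ≤ R}, g z ∂ν with hS
  set τ := ∫⁻ z in {z | R < |z|}, κ z ^ 2 ∂ν with hτ
  have hms : MeasurableSet {z : ℝ | |z| ≤ R} := measurableSet_le (by fun_prop) measurable_const
  have hcompl : {z : ℝ | |z| ≤ R}ᶜ = {z | R < |z|} := by ext; simp
  have h1 : ∫⁻ a, transOp ν K g a ^ 2 ∂ν ≤ D * (∫⁻ z, κ z * g z ∂ν) ^ 2 := by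
    rw [hD, ← lintegral_mul_const _ (hκm.pow_const 2)]
    refine lintegral_mono fun a => ?_
    rw [← mul_pow]
    gcongr
    have hκg : Measurable fun z => κ z * g z := hκm.mul hg
    rw [transOp, ← lintegral_const_mul _ hκg]
    refine lintegral_mono fun z => ?_
    rw [← mul_assoc]
    gcongr
    exact hκ a z
  have h2 : ∫⁻ z, κ z * g z ∂ν ≤ C * S + ∫⁻ z in {z | R < |z|}, κ z * g z ∂ν := by
    rw [← lintegral_add_compl _ hms, hcompl]
    gcongr
    rw [hS, ← lintegral_const_mul _ hg]
    refine setLIntegral_mono (hg.const_mul C) fun z hz => ?_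
    gcongr
    exact hCR z hz
  have h3 : (∫⁻ z in {z | R < |z|}, κ z * g z ∂ν) ^ 2 ≤ τ * N :=
    (sq_lintegral_mul_le hκm hg).trans (by
      gcongr
      exact (setLIntegral_le_lintegral _ _).trans hgN)
  have h4 : ∀ x y : ℝ≥0∞, (x + y) ^ 2 ≤ 2 * (x ^ 2 + y ^ 2) := fun x y => by
    induction x with
    | top => simp
    | coe x =>
      induction y with
      | top => simp
      | coe y => exact_mod_cast add_sq_le (a := x) (b := y)
  have h5 : ε * N ≤ 2 * D * C ^ 2 * S ^ 2 + ε / 2 * N := by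
    calc ε * N ≤ D * (C * S + ∫⁻ z in {z | R < |z|}, κ z * g z ∂ν) ^ 2 :=
          hle.trans (h1.trans (by gcongr))
      _ ≤ D * (2 * ((C * S) ^ 2 + τ * N)) := by
          gcongr
          exact (h4 _ _).trans (by gcongr)
      _ = 2 * D * C ^ 2 * S ^ 2 + 2 * D * τ * N := by ring
      _ ≤ _ := by
          gcongr
          exact (mul_le_mul_right hR _).trans ENNReal.mul_div_le
  have h6 : ε / 2 * N ≤ 2 * D * C ^ 2 * S ^ 2 := by
    have hfin : ε / 2 * N ≠ ∞ := ENNReal.mul_ne_top (ENNReal.div_ne_top hε' (by simp)) hgfin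
    rw [← ENNReal.add_le_add_iff_right hfin, ← add_mul, ENNReal.add_halves]
    exact h5
  rw [← ENNReal.mul_div_right_comm]
  exact ENNReal.div_le_of_le_mul' h6

/-- Enlarging the half-line strictly improves the `L²` norm of the cut operator. -/
lemma exists_gain [IsProbabilityMeasure ν] [ν.IsOpenPosMeasure] (hK : IsSymmDensity ν K)
    {c : ℝ≥0∞} (hc : c ≠ 0) (hc' : c ≠ ∞) {h h' : ℝ} (hh : h < h') {ε : ℝ≥0∞} (hε : ε ≠ 0)
    (hε' : ε ≠ ∞) :
    ∃ δ : ℝ≥0∞, δ ≠ 0 ∧ ∀ g : ℝ → ℝ≥0∞, Measurable g → ∫⁻ z, g z ^ 2 ∂ν ≠ ∞ →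
      ε * ∫⁻ z, g z ^ 2 ∂ν ≤ ∫⁻ a, cutOp ν K c (Set.Ici h') g a ^ 2 ∂ν →
      ∫⁻ a, cutOp ν K c (Set.Ici h') g a ^ 2 ∂ν + δ * ∫⁻ z, g z ^ 2 ∂ν ≤
        ∫⁻ a, cutOp ν K c (Set.Ici h) ((Set.Ici h').indicator g) a ^ 2 ∂ν := by
  obtain ⟨R, hR, δ, hδ, H⟩ := exists_le_sq_setLIntegral hK (ε := ε / c ^ 2)
    (ENNReal.div_ne_zero.2 ⟨hε, ENNReal.pow_ne_top hc'⟩)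
    (ENNReal.div_ne_top hε' (pow_ne_zero 2 hc)) (max |h| |h'|)
  obtain ⟨k, hk, hkK⟩ := hK.exists_pos_le R
  have hm : ν (Set.Ico h h') ≠ 0 := fun h0 => by
    have : ν (Set.Ioo h h') = 0 := measure_mono_null Set.Ioo_subset_Ico_self h0
    exact (isOpen_Ioo.measure_pos ν (Set.nonempty_Ioo.2 hh)).ne' this
  refine ⟨c ^ 2 * k ^ 2 * δ * ν (Set.Ico h h'), by simp [hc, hk, hδ, hm], fun g hg hgfin hle => ?_⟩
  set g' := (Set.Ici h').indicator g with hg'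
  have hg'm : Measurable g' := hg.indicator measurableSet_Ici
  have hsub : ∫⁻ z, g' z ^ 2 ∂ν ≤ ∫⁻ z, g z ^ 2 ∂ν :=
    lintegral_mono fun z => pow_le_pow_left' (Set.indicator_le_self _ _ _) 2
  have hind : (Set.Ici h).indicator g' = g' := by
    rw [hg', Set.indicator_indicator, Set.inter_eq_right.2 (Set.Ici_subset_Ici.2 hh.le)]
  have hQm : Measurable fun a => c * transOp ν K g' a := (measurable_transOp hK hg'm).const_mul c
  have e1 : ∀ a, cutOp ν K c (Set.Ici h') g a ^ 2 =
      (Set.Ici h').indicator (fun a => (c * transOp ν K g' a) ^ 2) a := fun a => by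
    by_cases ha : a ∈ Set.Ici h' <;> simp [cutOp, ha, ← hg']
  have e2 : ∀ a, cutOp ν K c (Set.Ici h) g' a ^ 2 =
      (Set.Ici h').indicator (fun a => (c * transOp ν K g' a) ^ 2) a +
        (Set.Ico h h').indicator (fun a => (c * transOp ν K g' a) ^ 2) a := fun a => by
    unfold cutOp
    rw [hind]
    by_cases ha : h' ≤ a
    · simp [ha, hh.le.trans ha, Set.indicator, not_lt.2 ha]
    · by_cases ha' : h ≤ a <;> simp [ha, ha', Set.indicator, not_le.1 ha]
  have hle' : ε / c ^ 2 * ∫⁻ z, g z ^ 2 ∂ν ≤ ∫⁻ a, transOp ν K g' a ^ 2 ∂ν := by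
    have : ∫⁻ a, cutOp ν K c (Set.Ici h') g a ^ 2 ∂ν ≤
        c ^ 2 * ∫⁻ a, transOp ν K g' a ^ 2 ∂ν := by
      rw [← lintegral_const_mul _ ((measurable_transOp hK hg'm).pow_const 2)]
      refine lintegral_mono fun a => ?_
      rw [e1, ← mul_pow]
      exact Set.indicator_le_self _ _ _
    rw [← ENNReal.mul_div_right_comm]
    exact ENNReal.div_le_of_le_mul' (hle.trans this)
  have hS := H g' _ hg'm hgfin hsub hle'
  set S := ∫⁻ z in {z | |z| ≤ R}, g' z ∂ν
  have hlow : ∀ a ∈ Set.Ico h h', k * S ≤ transOp ν K g' a := fun a ha => by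
    have haR : |a| ≤ R := by
      have h1 := le_max_left |h| |h'|
      have h2 := le_max_right |h| |h'|
      refine abs_le.2 ⟨?_, ?_⟩ <;>
        linarith [neg_abs_le h, le_abs_self h', ha.1, ha.2]
    rw [← lintegral_const_mul _ hg'm, transOp]
    refine (setLIntegral_mono (hK.measurable_mul a hg'm) fun z hz => ?_).trans
      (setLIntegral_le_lintegral {z | |z| ≤ R} _)
    gcongr
    exact hkK a z haR hz
  simp_rw [e1, e2]
  rw [lintegral_add_left ((hQm.pow_const 2).indicator measurableSet_Ici)]
  gcongr
  calc c ^ 2 * k ^ 2 * δ * ν (Set.Ico h h') * ∫⁻ z, g z ^ 2 ∂ν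
      = c ^ 2 * k ^ 2 * (δ * ∫⁻ z, g z ^ 2 ∂ν) * ν (Set.Ico h h') := by ring
    _ ≤ c ^ 2 * k ^ 2 * S ^ 2 * ν (Set.Ico h h') := by gcongr
    _ = ∫⁻ a, (Set.Ico h h').indicator (fun _ => (c * (k * S)) ^ 2) a ∂ν := by
        rw [lintegral_indicator_const measurableSet_Ico]
        ring
    _ ≤ _ := by
        refine lintegral_mono fun a => ?_
        refine Set.indicator_le_indicator' fun ha => ?_
        gcongr
        exact hlow a ha

end Gain

section Subsolution

variable {ν : Measure ℝ} {K : ℝ → ℝ → ℝ≥0∞}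

lemma IsSymmDensity.ne_top (hK : IsSymmDensity ν K) (a z : ℝ) : K a z ≠ ∞ := by
  obtain ⟨κ, -, -, hle, hloc⟩ := hK.exists_dominating
  obtain ⟨C, hC, h1⟩ := hloc (max |a| |z|)
  refine ((hle a z).trans_lt (ENNReal.mul_lt_top ?_ ?_)).ne
  · exact (h1 a (le_max_left _ _)).trans_lt hC.lt_top
  · exact (h1 z (le_max_right _ _)).trans_lt hC.lt_top

lemma IsSymmDensity.ne_zero (hK : IsSymmDensity ν K) (a z : ℝ) : K a z ≠ 0 := by
  obtain ⟨c, hc, h1⟩ := hK.exists_pos_le (max |a| |z|)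
  exact ((pos_iff_ne_zero.2 hc).trans_le (h1 a z (le_max_left _ _) (le_max_right _ _))).ne'

lemma exists_lt_lintegral_sq_cutOp_Icc [SFinite ν] (hK : IsSymmDensity ν K) {c : ℝ≥0∞}
    (hc' : c ≠ ∞) {h : ℝ} {g : ℝ → ℝ≥0∞} (hg : Measurable g) {B : ℝ≥0∞}
    (hB : B < ∫⁻ a, cutOp ν K c (Set.Ici h) g a ^ 2 ∂ν) :
    ∃ n : ℕ, B < ∫⁻ a, cutOp ν K c (Set.Icc h n) (fun z => min (g z) n) a ^ 2 ∂ν := by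
  set f : ℕ → ℝ → ℝ≥0∞ := fun n => (Set.Icc h n).indicator fun z => min (g z) n with hf
  have hfm : ∀ n, Measurable (f n) := fun n =>
    (hg.min measurable_const).indicator measurableSet_Icc
  have hsub : ∀ {m n : ℕ}, m ≤ n → Set.Icc h (m : ℝ) ⊆ Set.Icc h n := fun hmn =>
    Set.Icc_subset_Icc_right (by exact_mod_cast hmn)
  have hfmono : ∀ z, Monotone fun n => f n z := fun z m n hmn => by
    have h1 : min (g z) (m : ℝ≥0∞) ≤ min (g z) n := by gcongr
    exact (Set.indicator_le_indicator h1).trans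
      (Set.indicator_le_indicator_of_subset (hsub hmn) (fun _ => zero_le) z)
  have hev : ∀ a : ℝ, ∀ᶠ n : ℕ in Filter.atTop, (a ∈ Set.Icc h (n : ℝ) ↔ a ∈ Set.Ici h) :=
    fun a => by
    filter_upwards [Filter.eventually_ge_atTop ⌈a⌉₊] with n hn
    simp [(Nat.le_ceil a).trans (by exact_mod_cast hn : (⌈a⌉₊ : ℝ) ≤ n)]
  have hflim : ∀ z, Filter.Tendsto (fun n => f n z) Filter.atTop
      (nhds ((Set.Ici h).indicator g z)) := fun z => by
    have h1 : Filter.Tendsto (fun n : ℕ => min (g z) n) Filter.atTop (nhds (min (g z) ∞)) :=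
      tendsto_const_nhds.min ENNReal.tendsto_nat_nhds_top
    rw [min_top_right] at h1
    by_cases hz : z ∈ Set.Ici h
    · rw [Set.indicator_of_mem hz]
      refine h1.congr' ?_
      filter_upwards [hev z] with n hn
      simp only [hf]
      rw [Set.indicator_of_mem (hn.2 hz)]
    · rw [Set.indicator_of_notMem hz]
      refine tendsto_const_nhds.congr fun n => ?_
      simp only [hf]
      rw [Set.indicator_of_notMem (fun h' => hz h'.1)]
  have hQmono : ∀ a, Monotone fun n => transOp ν K (f n) a := fun a m n hmn =>
    transOp_mono (fun z => hfmono z hmn) a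
  have hQlim : ∀ a, Filter.Tendsto (fun n => transOp ν K (f n) a) Filter.atTop
      (nhds (transOp ν K ((Set.Ici h).indicator g) a)) := fun a => by
    refine lintegral_tendsto_of_tendsto_of_monotone
      (fun n => (hK.measurable_mul a (hfm n)).aemeasurable)
      (.of_forall fun z m n hmn => mul_le_mul_right (hfmono z hmn) _)
      (.of_forall fun z => ?_)
    exact ENNReal.Tendsto.const_mul (hflim z) (.inr (hK.ne_top a z))
  set F : ℕ → ℝ → ℝ≥0∞ := fun n => cutOp ν K c (Set.Icc h n) fun z => min (g z) n with hF
  have hFm : ∀ n, Measurable (F n) := fun n =>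
    measurable_cutOp hK c measurableSet_Icc (hg.min measurable_const)
  have hFmono : ∀ a, Monotone fun n => F n a := fun a m n hmn => by
    have h1 : c * transOp ν K (f m) a ≤ c * transOp ν K (f n) a :=
      mul_le_mul_right (hQmono a hmn) _
    exact (Set.indicator_le_indicator h1).trans
      (Set.indicator_le_indicator_of_subset (hsub hmn) (fun _ => zero_le) a)
  have hFlim : ∀ a, Filter.Tendsto (fun n => F n a) Filter.atTop
      (nhds (cutOp ν K c (Set.Ici h) g a)) := fun a => by
    by_cases ha : a ∈ Set.Ici h
    · rw [cutOp, Set.indicator_of_mem ha]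
      refine (ENNReal.Tendsto.const_mul (hQlim a) (.inr hc')).congr' ?_
      filter_upwards [hev a] with n hn
      simp only [hF, cutOp]
      rw [Set.indicator_of_mem (hn.2 ha)]
    · rw [cutOp, Set.indicator_of_notMem ha]
      refine tendsto_const_nhds.congr fun n => ?_
      simp only [hF, cutOp]
      rw [Set.indicator_of_notMem (fun h' => ha h'.1)]
  have hlim := lintegral_tendsto_of_tendsto_of_monotone (μ := ν)
    (fun n => ((hFm n).pow_const 2).aemeasurable)
    (.of_forall fun a m n hmn => pow_le_pow_left' (hFmono a hmn) 2)
    (.of_forall fun a => ENNReal.Tendsto.pow (hFlim a))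
  exact (hlim.eventually (lt_mem_nhds hB)).exists

lemma cutOp_indicator (c : ℝ≥0∞) (I : Set ℝ) (f : ℝ → ℝ≥0∞) :
    cutOp ν K c I (I.indicator f) = cutOp ν K c I f := by
  simp [cutOp, Set.indicator_indicator]

lemma exists_lt_lintegral_mul_iterate [SFinite ν] (hK : IsSymmDensity ν K) {c : ℝ≥0∞}
    {I : Set ℝ} (hI : MeasurableSet I) {g : ℝ → ℝ≥0∞} (hg : Measurable g) {M N : ℝ≥0∞}
    (hM : 1 < M) (hN : N ≠ ∞) (hgN : ∫⁻ a, g a ^ 2 ∂ν ≤ N)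
    (h : M * N < ∫⁻ a, cutOp ν K c I g a ^ 2 ∂ν) {B : ℝ≥0∞} (hB : B ≠ ∞) :
    ∃ m : ℕ, B < ∫⁻ a, g a * (cutOp ν K c I)^[m] g a ∂ν := by
  set A := cutOp ν K c I
  set b : ℕ → ℝ≥0∞ := fun m => ∫⁻ a, g a * A^[m] g a ∂ν with hb
  have hAm : ∀ m, Measurable (A^[m] g) := measurable_iterate_cutOp hK c hI hg
  have hdouble : ∀ m, ∫⁻ a, A^[m] g a ^ 2 ∂ν = b (m + m) := fun m => by
    rw [hb]
    dsimp only
    rw [Function.iterate_add_apply, lintegral_mul_iterate_cutOp hK c hI hg (hAm m)]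
    simp only [sq]; rfl
  have hstep : ∀ m, b m ^ 2 ≤ N * b (m + m) := fun m => by
    rw [← hdouble]
    refine (sq_lintegral_mul_le hg (hAm m)).trans ?_
    gcongr
  have h2 : M * N < b 2 := by rw [← hdouble 1]; exact h
  have hN0 : N ≠ 0 := by
    rintro rfl
    have := hstep 2
    simp only [zero_mul, nonpos_iff_eq_zero, ne_eq, OfNat.ofNat_ne_zero, not_false_eq_true,
      pow_eq_zero_iff] at this
    simp [this] at h2
  have hgrow : ∀ k : ℕ, M ^ (2 ^ k) * N ≤ b (2 ^ (k + 1)) := fun k => by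
    induction k with
    | zero => simpa using h2.le
    | succ k ih =>
      refine (ENNReal.mul_le_mul_iff_right hN0 hN).1 ?_
      calc N * (M ^ 2 ^ (k + 1) * N) = (M ^ 2 ^ k * N) ^ 2 := by rw [pow_succ 2, pow_mul]; ring
        _ ≤ b (2 ^ (k + 1)) ^ 2 := pow_le_pow_left' ih 2
        _ ≤ _ := hstep _
        _ = _ := by rw [← two_mul, ← pow_succ']
  have hlim : Filter.Tendsto (fun k : ℕ => M ^ k * N) Filter.atTop (nhds ∞) := by
    have h1 : Filter.Tendsto (fun k : ℕ => M ^ k) Filter.atTop (nhds ∞) :=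
      ENNReal.tendsto_pow_atTop_nhds_top_iff.2 hM
    have := ENNReal.Tendsto.mul_const (b := N) h1 (.inl (by simp))
    rwa [ENNReal.top_mul hN0] at this
  obtain ⟨k, hk⟩ := (((hlim.comp (tendsto_pow_atTop_atTop_of_one_lt one_lt_two)).eventually
    (lt_mem_nhds hB.lt_top))).exists
  exact ⟨2 ^ (k + 1), hk.trans_le (hgrow k)⟩

lemma cutOp_sum [SFinite ν] (hK : IsSymmDensity ν K) (c : ℝ≥0∞) {I : Set ℝ} (hI : MeasurableSet I)
    {ι : Type*} (s : Finset ι) {f : ι → ℝ → ℝ≥0∞} (hf : ∀ i, Measurable (f i)) (a : ℝ) :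
    cutOp ν K c I (fun z => ∑ i ∈ s, f i z) a = ∑ i ∈ s, cutOp ν K c I (f i) a := by
  by_cases ha : a ∈ I
  · simp only [cutOp, ha, Set.indicator_of_mem, transOp]
    rw [← Finset.mul_sum, ← lintegral_finsetSum _ fun i _ =>
      hK.measurable_mul a ((hf i).indicator hI)]
    congr 1
    refine lintegral_congr fun z => ?_
    by_cases hz : z ∈ I <;> simp [hz, Finset.mul_sum]
  · simp [cutOp, ha]

lemma iterate_cutOp_one_le (hK : IsSymmDensity ν K) (c : ℝ≥0∞) (I : Set ℝ) (j : ℕ)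
    (a : ℝ) : (cutOp ν K c I)^[j] (I.indicator 1) a ≤ c ^ j := by
  induction j generalizing a with
  | zero => simpa using Set.indicator_le_self I (1 : ℝ → ℝ≥0∞) a
  | succ j ih =>
    rw [Function.iterate_succ_apply']
    refine (cutOp_mono c I (g := fun _ => c ^ j * 1) (fun z => by simpa using ih z) a).trans ?_
    refine (cutOp_le _ _ _ _).trans ?_
    rw [pow_succ']
    gcongr
    simp [transOp]
    rw [lintegral_mul_const _ (hK.measurable_right a), hK.lintegral_eq_one, one_mul]

lemma iterate_cutOp_one_of_notMem (c : ℝ≥0∞) (I : Set ℝ) (j : ℕ) {a : ℝ}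
    (ha : a ∉ I) : (cutOp ν K c I)^[j] (I.indicator 1) a = 0 := by
  cases j with
  | zero => simp [ha]
  | succ j => simp [Function.iterate_succ_apply', cutOp, ha]

lemma exists_subsolution_of_two_le [SFinite ν] (hK : IsSymmDensity ν K) {c : ℝ≥0∞}
    (hc' : c ≠ ∞) {I : Set ℝ} (hI : MeasurableSet I) {m : ℕ} (hm : m ≠ 0)
    (h2 : ∀ a ∈ I, 2 ≤ (cutOp ν K c I)^[m] (I.indicator 1) a) :
    ∃ g : ℝ → ℝ≥0∞, Measurable g ∧ (∀ a, g a ≤ 1) ∧ (∀ a, g a ≠ 0 ↔ a ∈ I) ∧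
      ∃ r : ℝ≥0∞, 1 < r ∧ r ≠ ∞ ∧ ∀ a, r * g a ≤ c * transOp ν K g a := by
  set A := cutOp ν K c I
  obtain ⟨r, hr1, hr, hrm⟩ : ∃ r : ℝ≥0∞, 1 < r ∧ r ≠ ∞ ∧ r ^ m = 2 := by
    have hm0 : (0 : ℝ) < m := by exact_mod_cast Nat.pos_of_ne_zero hm
    refine ⟨2 ^ (1 / (m : ℝ)), ENNReal.one_lt_rpow (by norm_num) (by positivity),
      ENNReal.rpow_ne_top_of_nonneg (by positivity) (by simp), ?_⟩
    rw [← ENNReal.rpow_natCast, ← ENNReal.rpow_mul]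
    simp [hm]
  have hr0 : r ≠ 0 := (zero_lt_one.trans hr1).ne'
  set u : ℕ → ℝ → ℝ≥0∞ := fun j => A^[j] (I.indicator 1) with hu
  have hum : ∀ j, Measurable (u j) :=
    measurable_iterate_cutOp hK c hI (measurable_one.indicator hI)
  set G : ℝ → ℝ≥0∞ := fun a => ∑ j ∈ Finset.range m, r ^ (m - 1 - j) * u j a with hG
  set C : ℝ≥0∞ := ∑ j ∈ Finset.range m, r ^ (m - 1 - j) * c ^ j with hC
  have hGC : ∀ a, G a ≤ C := fun a => Finset.sum_le_sum fun j _ => by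
    gcongr; exact iterate_cutOp_one_le hK c I j a
  have hC' : C ≠ ∞ := ENNReal.sum_ne_top.2 fun j _ =>
    ENNReal.mul_ne_top (ENNReal.pow_ne_top hr) (ENNReal.pow_ne_top hc')
  have hGm : Measurable G := Finset.measurable_fun_sum _ fun j _ => (hum j).const_mul _
  have hGI : ∀ a, G a ≠ 0 ↔ a ∈ I := fun a => by
    refine ⟨fun h => by_contra fun ha => h ?_, fun ha => ?_⟩
    · exact Finset.sum_eq_zero fun j _ => by
        rw [hu]; dsimp only; rw [iterate_cutOp_one_of_notMem c I j ha, mul_zero]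
    · intro h0
      have := (Finset.sum_eq_zero_iff.1 h0) 0 (Finset.mem_range.2 (Nat.pos_of_ne_zero hm))
      simp [hu, ha, hr0] at this
  have hC0 : C⁻¹ ≠ 0 := ENNReal.inv_ne_zero.2 hC'
  have hAG : ∀ a, A G a = ∑ j ∈ Finset.range m, r ^ (m - 1 - j) * u (j + 1) a := fun a => by
    rw [hG, show A = cutOp ν K c I from rfl,
      cutOp_sum hK c hI _ fun j => (hum j).const_mul (r ^ (m - 1 - j))]
    refine Finset.sum_congr rfl fun j _ => ?_
    rw [cutOp_const_mul c I _ (ENNReal.pow_ne_top hr), hu]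
    dsimp only
    rw [Function.iterate_succ_apply']
  have hrG : ∀ a, r * G a ≤ A G a := fun a => by
    have key : A G a + r ^ m * u 0 a = r * G a + u m a := by
      rw [hAG, hG, Finset.mul_sum]
      have e1 : ∑ j ∈ Finset.range m, r * (r ^ (m - 1 - j) * u j a) =
          ∑ j ∈ Finset.range m, r ^ (m - j) * u j a := by
        refine Finset.sum_congr rfl fun j hj => ?_
        have := Finset.mem_range.1 hj
        rw [← mul_assoc, ← pow_succ', show m - 1 - j + 1 = m - j by omega]
      have e2 : ∑ j ∈ Finset.range m, r ^ (m - 1 - j) * u (j + 1) a =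
          ∑ j ∈ Finset.range m, r ^ (m - (j + 1)) * u (j + 1) a :=
        Finset.sum_congr rfl fun j _ => by rw [show m - 1 - j = m - (j + 1) by omega]
      rw [e1, e2]
      have h1 := Finset.sum_range_succ (fun j => r ^ (m - j) * u j a) m
      have h2 := Finset.sum_range_succ' (fun j => r ^ (m - j) * u j a) m
      simp only [Nat.sub_self, pow_zero, one_mul, Nat.sub_zero] at h1 h2
      rw [← h1, h2]
    have h3 : r ^ m * u 0 a ≤ u m a := by
      by_cases ha : a ∈ I
      · rw [hrm]; simpa [hu, ha] using h2 a ha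
      · simp [hu, ha]
    have h4 : r ^ m * u 0 a ≠ ∞ := by
      refine ENNReal.mul_ne_top (ENNReal.pow_ne_top hr) ?_
      by_cases ha : a ∈ I <;> simp [hu, ha]
    refine (ENNReal.add_le_add_iff_right h4).1 ?_
    rw [key]
    gcongr
  by_cases hCz : C = 0
  · have hGz : ∀ a, G a = 0 := fun a => by simpa [hCz] using hGC a
    refine ⟨G, hGm, fun a => by simp [hGz], hGI, r, hr1, hr, fun a => by simp [hGz]⟩
  have hCi : C⁻¹ ≠ ∞ := ENNReal.inv_ne_top.2 hCz
  refine ⟨fun a => C⁻¹ * G a, hGm.const_mul _, fun a => ?_, fun a => ?_, r, hr1, hr, fun a => ?_⟩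
  · calc C⁻¹ * G a ≤ C⁻¹ * C := by gcongr; exact hGC a
      _ = 1 := ENNReal.inv_mul_cancel hCz hC'
  · rw [mul_ne_zero_iff, hGI]; simp [hC0]
  · rw [transOp_const_mul _ hCi]
    calc r * (C⁻¹ * G a) = C⁻¹ * (r * G a) := by ring
      _ ≤ C⁻¹ * (c * transOp ν K G a) :=
        mul_le_mul_right ((hrG a).trans (cutOp_le c I G a)) _
      _ = _ := by ring

/-- If the square norm of some function grows under `f ↦ 1_{[h,∞)} c K (1_{[h,∞)} f)`, then this
operator has a bounded strict subsolution. -/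
lemma exists_subsolution [IsProbabilityMeasure ν] (hK : IsSymmDensity ν K) {c : ℝ≥0∞}
    (hc : c ≠ 0) (hc' : c ≠ ∞) {h : ℝ} {g : ℝ → ℝ≥0∞} (hg : Measurable g)
    (hg2 : ∫⁻ a, g a ^ 2 ∂ν ≠ ∞) {M : ℝ≥0∞} (hM : 1 < M)
    (hgrow : M * ∫⁻ a, g a ^ 2 ∂ν < ∫⁻ a, cutOp ν K c (Set.Ici h) g a ^ 2 ∂ν) :
    ∃ g : ℝ → ℝ≥0∞, Measurable g ∧ (∀ a, g a ≤ 1) ∧ (∀ a, g a ≠ 0 → h ≤ a) ∧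
      ν {a | g a ≠ 0} ≠ 0 ∧
      ∃ r : ℝ≥0∞, 1 < r ∧ r ≠ ∞ ∧ ∀ a, r * g a ≤ c * transOp ν K g a := by
  obtain ⟨n, hn⟩ := exists_lt_lintegral_sq_cutOp_Icc hK hc' hg hgrow
  set I := Set.Icc h (n : ℝ) with hI
  have hIm : MeasurableSet I := measurableSet_Icc
  set g' : ℝ → ℝ≥0∞ := I.indicator fun z => min (g z) n with hg'
  have hg'm : Measurable g' := (hg.min measurable_const).indicator hIm
  have hg'g : ∀ a, g' a ≤ g a := fun a =>
    (Set.indicator_le_self _ _ _).trans (min_le_left _ _)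
  rw [← cutOp_indicator] at hn
  obtain ⟨k, hk, hkK⟩ := hK.exists_pos_le (max |h| |(n : ℝ)|)
  set k' : ℝ≥0∞ := min k 1 with hk'
  have hk0 : k' ≠ 0 := by simp [hk', hk]
  have hkt : k' ≠ ∞ := ((min_le_right k 1).trans_lt ENNReal.one_lt_top).ne
  obtain ⟨m, hm⟩ := exists_lt_lintegral_mul_iterate hK hIm hg'm hM hg2
    (lintegral_mono fun a => pow_le_pow_left' (hg'g a) 2) hn
    (B := (n : ℝ≥0∞) * (n * (2 * (c * k')⁻¹)))
    (ENNReal.mul_ne_top (by simp) (ENNReal.mul_ne_top (by simp)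
      (ENNReal.mul_ne_top (by simp) (ENNReal.inv_ne_top.2 (mul_ne_zero hc hk0)))))
  set S := ∫⁻ a, I.indicator 1 a * (cutOp ν K c I)^[m] (I.indicator 1) a ∂ν with hS
  have hum : Measurable ((cutOp ν K c I)^[m] (I.indicator 1)) :=
    measurable_iterate_cutOp hK c hIm (measurable_one.indicator hIm) m
  have hvm : Measurable fun a => I.indicator 1 a * (cutOp ν K c I)^[m] (I.indicator 1) a :=
    (measurable_one.indicator hIm).mul hum
  have hg'n : ∀ a, g' a ≤ n * I.indicator 1 a := fun a => by
    by_cases ha : a ∈ I <;> simp [hg', ha]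
  have hS2 : 2 * (c * k')⁻¹ < S := by
    by_contra! hcon
    refine hm.not_ge ?_
    calc ∫⁻ a, g' a * (cutOp ν K c I)^[m] g' a ∂ν
        ≤ ∫⁻ a, n * (n * (I.indicator 1 a * (cutOp ν K c I)^[m] (I.indicator 1) a)) ∂ν := by
          refine lintegral_mono fun a => ?_
          refine (mul_le_mul' (hg'n a) (iterate_cutOp_mono c I hg'n m a)).trans_eq ?_
          rw [iterate_cutOp_const_mul c I _ (by simp)]
          ring
      _ = n * (n * S) := by
          rw [lintegral_const_mul _ (hvm.const_mul _), lintegral_const_mul _ hvm]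
      _ ≤ _ := by gcongr
  have habs : ∀ a ∈ I, |a| ≤ max |h| |(n : ℝ)| := fun a ha => abs_le_max_abs_abs ha.1 ha.2
  have hlow : ∀ a ∈ I, 2 ≤ (cutOp ν K c I)^[m + 1] (I.indicator 1) a := fun a ha => by
    rw [Function.iterate_succ_apply', cutOp, Set.indicator_of_mem ha, transOp]
    calc (2 : ℝ≥0∞) = (c * k') * (2 * (c * k')⁻¹) := by
          rw [mul_left_comm, ENNReal.mul_inv_cancel (mul_ne_zero hc hk0)
            (ENNReal.mul_ne_top hc' hkt), mul_one]
      _ ≤ (c * k') * S := by gcongr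
      _ = c * ∫⁻ z, k' * (I.indicator 1 z * (cutOp ν K c I)^[m] (I.indicator 1) z) ∂ν := by
          rw [lintegral_const_mul _ hvm, mul_assoc]
      _ ≤ _ := by
          refine mul_le_mul_right (lintegral_mono fun z => ?_) _
          by_cases hz : z ∈ I
          · simp only [hz, Set.indicator_of_mem, Pi.one_apply, one_mul]
            gcongr
            exact (min_le_left k 1).trans (hkK a z (habs a ha) (habs z hz))
          · simp [hz]
  obtain ⟨G, hGm, hG1, hGI, r, hr⟩ := exists_subsolution_of_two_le hK hc' hIm
    (Nat.succ_ne_zero m) hlow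
  refine ⟨G, hGm, hG1, fun a ha => ((hGI a).1 ha).1, ?_, r, hr⟩
  simp only [hGI, Set.ofPred_mem_eq]
  intro hν
  refine (pos_of_gt hS2).ne' ?_
  rw [hS, lintegral_eq_zero_iff hvm]
  have : ∀ᵐ a ∂ν, a ∉ I := measure_eq_zero_iff_ae_notMem.1 hν
  filter_upwards [this] with a ha
  simp [ha]

end Subsolution

section Supersolution

variable {ν : Measure ℝ} {K : ℝ → ℝ → ℝ≥0∞}

lemma one_sub_pow_le_one_sub {d : ℕ} {r x y : ℝ} (hr : 1 < r) (hx0 : 0 ≤ x) (hx1 : x ≤ 1)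
    (hxr : d * x ≤ r - 1) (hyx : r * y ≤ d * x) : (1 - x) ^ d ≤ 1 - y := by
  set t := (d : ℝ) * x with ht
  have ht0 : 0 ≤ t := by positivity
  refine le_of_mul_le_mul_right ?_ (by positivity : 0 < 1 + t)
  calc (1 - x) ^ d * (1 + t) ≤ (1 - x) ^ d * (1 + x) ^ d := by
        have : 0 ≤ (1 - x) ^ d := pow_nonneg (by linarith) d
        have := one_add_mul_le_pow (by linarith : -2 ≤ x) d
        gcongr
    _ = ((1 - x) * (1 + x)) ^ d := (mul_pow _ _ _).symm
    _ ≤ 1 := pow_le_one₀ (mul_nonneg (by linarith) (by linarith)) (by nlinarith)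
    _ ≤ (1 - y) * (1 + t) := by
        refine le_of_mul_le_mul_left ?_ (by linarith : 0 < r)
        nlinarith [mul_le_mul_of_nonneg_right hyx (by positivity : 0 ≤ 1 + t),
          mul_nonneg ht0 (sub_nonneg.2 hxr)]

/-- A strict subsolution of the linearised equation yields a supersolution of `s = (Q s) ^ d`. -/
lemma exists_supersolution (hK : IsSymmDensity ν K) {d : ℕ} (hd : d ≠ 0)
    {g : ℝ → ℝ≥0∞} (hg : Measurable g) (hg1 : ∀ a, g a ≤ 1) (hg0 : ν {a | g a ≠ 0} ≠ 0)
    {r : ℝ≥0∞} (hr1 : 1 < r) (hr : r ≠ ∞) (hrg : ∀ a, r * g a ≤ d * transOp ν K g a) :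
    ∃ s : ℝ → ℝ≥0∞, Measurable s ∧ (∀ a, s a ≤ 1) ∧ (∀ a, g a = 0 → s a = 1) ∧
      ν {a | s a < 1} ≠ 0 ∧ ∀ a, transOp ν K s a ^ d ≤ s a := by
  set ε : ℝ≥0∞ := min ((r - 1) / d) 1 with hε
  have hε1 : ε ≤ 1 := min_le_right _ _
  have hεt : ε ≠ ∞ := (hε1.trans_lt ENNReal.one_lt_top).ne
  have hε0 : ε ≠ 0 := by
    simp [hε, min_eq_iff, ENNReal.div_eq_zero_iff, tsub_eq_zero_iff_le, hr1]
  have hεd : d * ε ≤ r - 1 := by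
    calc d * ε ≤ d * ((r - 1) / d) := mul_le_mul_right (min_le_left _ _) _
      _ = r - 1 := ENNReal.mul_div_cancel (by exact_mod_cast hd) (by simp)
  have hεg : ∀ a, ε * g a ≤ 1 := fun a => by simpa using mul_le_mul' hε1 (hg1 a)
  have hsum : ∀ a, transOp ν K (fun z => 1 - ε * g z) a + ε * transOp ν K g a = 1 := fun a => by
    rw [← transOp_const_mul ε hεt, transOp, transOp, ← lintegral_add_right _
      (hK.measurable_mul a (hg.const_mul ε))]
    refine (lintegral_congr fun z => ?_).trans (hK.lintegral_eq_one a)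
    rw [← mul_add, tsub_add_cancel_of_le (hεg z), mul_one]
  refine ⟨fun a => 1 - ε * g a, measurable_const.sub (hg.const_mul ε), fun a => tsub_le_self,
    fun a ha => by simp [ha], ?_, fun a => ?_⟩
  · refine fun h => hg0 (measure_mono_null (fun a ha => ?_) h)
    refine ENNReal.sub_lt_self (by simp) (by simp) (mul_ne_zero hε0 ha)
  · set q := transOp ν K (fun z => 1 - ε * g z) a
    have hQ1 : transOp ν K g a ≤ 1 := transOp_le_one hK hg1 a
    have hqt : q ≠ ∞ := ((le_self_add.trans_eq (hsum a)).trans_lt ENNReal.one_lt_top).ne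
    have hxt : ε * transOp ν K g a ≠ ∞ :=
      ((le_add_self.trans_eq (hsum a)).trans_lt ENNReal.one_lt_top).ne
    have hyt : ε * g a ≠ ∞ := ((hεg a).trans_lt ENNReal.one_lt_top).ne
    have hq : q.toReal = 1 - (ε * transOp ν K g a).toReal := by
      have := congrArg ENNReal.toReal (hsum a)
      rw [ENNReal.toReal_add hqt hxt] at this
      simp only [ENNReal.toReal_one] at this
      linarith
    rw [← ENNReal.toReal_le_toReal (ENNReal.pow_ne_top hqt) (by simp), ENNReal.toReal_pow,
      ENNReal.toReal_sub_of_le (hεg a) (by simp), hq, ENNReal.toReal_one]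
    have hr1' : 1 < r.toReal := by
      simpa using (ENNReal.toReal_lt_toReal (by simp) hr).2 hr1
    refine one_sub_pow_le_one_sub hr1' ENNReal.toReal_nonneg ?_ ?_ ?_
    · simpa using ENNReal.toReal_mono (by simp) (le_add_self.trans_eq (hsum a))
    · have := ENNReal.toReal_mono (b := r - 1) (by finiteness)
        ((mul_le_mul_right (mul_le_of_le_one_right' hQ1) _).trans hεd :
          (d : ℝ≥0∞) * (ε * transOp ν K g a) ≤ r - 1)
      rw [ENNReal.toReal_sub_of_le hr1.le hr] at this
      simpa [ENNReal.toReal_mul] using this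
    · have h1 : r * (ε * g a) ≤ d * (ε * transOp ν K g a) := by
        rw [mul_left_comm, mul_left_comm (d : ℝ≥0∞)]
        exact mul_le_mul_right (hrg a) _
      have := ENNReal.toReal_mono (by finiteness) h1
      rwa [ENNReal.toReal_mul, ENNReal.toReal_mul (a := (d : ℝ≥0∞)), ENNReal.toReal_natCast]
        at this

/-- Iterating `f ↦ (Q f) ^ d` from a nontrivial supersolution bounded by one gives zero. -/
lemma tendsto_lintegral_iterate_zero [IsProbabilityMeasure ν] (hK : IsSymmDensity ν K) {d : ℕ}
    (hd : 2 ≤ d) {s : ℝ → ℝ≥0∞} (hs : Measurable s) (hs1 : ∀ a, s a ≤ 1)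
    (hs0 : ν {a | s a < 1} ≠ 0) (hsup : ∀ a, transOp ν K s a ^ d ≤ s a) :
    Filter.Tendsto (fun n => ∫⁻ a, (fun f a => transOp ν K f a ^ d)^[n] s a ∂ν)
      Filter.atTop (nhds 0) := by
  set B : (ℝ → ℝ≥0∞) → ℝ → ℝ≥0∞ := fun f a => transOp ν K f a ^ d with hB
  set u : ℕ → ℝ → ℝ≥0∞ := fun n => B^[n] s with hu
  have hsucc : ∀ n a, u (n + 1) a = transOp ν K (u n) a ^ d := fun n a => by
    simp only [hu, Function.iterate_succ_apply']; rfl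
  have hum : ∀ n, Measurable (u n) := fun n => by
    induction n with
    | zero => exact hs
    | succ n ih =>
      have : u (n + 1) = fun a => transOp ν K (u n) a ^ d := funext (hsucc n)
      rw [this]; exact (measurable_transOp hK ih).pow_const d
  have hstep : ∀ n a, u (n + 1) a ≤ u n a := fun n => by
    induction n with
    | zero => exact hsup
    | succ n ih =>
      intro a
      rw [hsucc (n + 1), hsucc n]
      exact pow_le_pow_left' (transOp_mono ih a) d
  have hanti : ∀ a, Antitone fun n => u n a := fun a => antitone_nat_of_succ_le fun n => hstep n a
  have hu1 : ∀ n a, u n a ≤ 1 := fun n a => (hanti a (zero_le)).trans (hs1 a)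
  set w : ℝ → ℝ≥0∞ := fun a => ⨅ n, u n a with hw
  have hwm : Measurable w := Measurable.iInf hum
  have hlim : ∀ a, Filter.Tendsto (fun n => u n a) Filter.atTop (nhds (w a)) := fun a =>
    tendsto_atTop_iInf (hanti a)
  have hws : ∀ a, w a ≤ s a := fun a => iInf_le _ 0
  have hw1 : ∀ a, w a ≤ 1 := fun a => (hws a).trans (hs1 a)
  have hQlim : ∀ a, Filter.Tendsto (fun n => transOp ν K (u n) a) Filter.atTop
      (nhds (transOp ν K w a)) := fun a => by
    refine tendsto_lintegral_of_dominated_convergence (K a) (fun n => hK.measurable_mul a (hum n))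
      (fun n => .of_forall fun z => ?_) (by simp [hK.lintegral_eq_one]) (.of_forall fun z => ?_)
    · exact mul_le_of_le_one_right' (hu1 n z)
    · exact ENNReal.Tendsto.const_mul (hlim z) (.inr (hK.ne_top a z))
  have hfix : ∀ a, w a = transOp ν K w a ^ d := fun a => by
    refine tendsto_nhds_unique ((hlim a).comp (Filter.tendsto_add_atTop_nat 1)) ?_
    refine (ENNReal.Tendsto.pow (hQlim a)).congr fun n => (hsucc n a).symm
  have hlimint : Filter.Tendsto (fun n => ∫⁻ a, u n a ∂ν) Filter.atTop (nhds (∫⁻ a, w a ∂ν)) := by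
    refine tendsto_lintegral_of_dominated_convergence (fun _ => 1) hum
      (fun n => .of_forall (hu1 n)) (by simp) (.of_forall hlim)
  suffices h0 : ∫⁻ a, w a ∂ν = 0 by rwa [h0] at hlimint
  have hQ1 : ∀ a, transOp ν K w a ≤ 1 := transOp_le_one hK hw1
  have hQm := measurable_transOp hK hwm
  have hwQ : w =ᵐ[ν] transOp ν K w := by
    refine ae_eq_of_ae_le_of_lintegral_le (.of_forall fun a => ?_) ?_ hQm.aemeasurable ?_
    · rw [hfix a]; exact pow_le_of_le_one (zero_le) (hQ1 a) (by omega)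
    · exact ((lintegral_mono hw1).trans_lt (by simp)).ne
    · rw [lintegral_transOp hK hwm]
  by_contra hne
  have hQpos : ∀ a, transOp ν K w a ≠ 0 := fun a h0 => by
    rw [transOp, lintegral_eq_zero_iff (hK.measurable_mul a hwm)] at h0
    refine hne ((lintegral_eq_zero_iff hwm).2 ?_)
    filter_upwards [h0] with z hz
    simpa [hK.ne_zero] using hz
  refine hs0 ?_
  have : ∀ᵐ a ∂ν, ¬ s a < 1 := by
    filter_upwards [hwQ] with a ha hlt
    have h1 : w a < 1 := (hws a).trans_lt hlt
    have h2 := hfix a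
    rw [← ha] at h2
    have h3 : w a ^ d < w a := by
      obtain ⟨k, rfl⟩ := Nat.exists_eq_add_of_le' (show 1 ≤ d by omega)
      have hw0 : w a ≠ 0 := by rw [ha]; exact hQpos a
      rw [pow_succ]
      calc w a ^ k * w a < 1 * w a := by
            refine ENNReal.mul_lt_mul_left hw0 (h1.trans ENNReal.one_lt_top).ne ?_
            exact pow_lt_one' h1 (by omega)
        _ = w a := one_mul _
    exact h3.ne h2.symm
  exact measure_eq_zero_iff_ae_notMem.2 this

end Supersolution

section Bridge

variable {d : ℕ} {Q : Lp ℝ 2 (siteLaw d) →L[ℝ] Lp ℝ 2 (siteLaw d)}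
  {Ph : ℝ → (Lp ℝ 2 (siteLaw d) →L[ℝ] Lp ℝ 2 (siteLaw d))}

lemma enorm_sq_eq_lintegral {α : Type*} [MeasurableSpace α] {μ : Measure α} (f : Lp ℝ 2 μ) :
    ‖f‖ₑ ^ 2 = ∫⁻ a, ‖f a‖ₑ ^ 2 ∂μ := by
  rw [Lp.enorm_def, eLpNorm_eq_lintegral_rpow_enorm_toReal (by simp) (by simp)]
  simp only [ENNReal.toReal_ofNat]
  rw [← ENNReal.rpow_natCast, ← ENNReal.rpow_mul]
  norm_num

lemma gaussianReal_absolutelyContinuous_siteLaw (hd : 2 ≤ d) (a : ℝ) :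
    gaussianReal (a / d) (Real.toNNReal (1 / d)) ≪ siteLaw d := by
  have h0 : Real.toNNReal (1 / d : ℝ) ≠ 0 := by simp; omega
  exact (gaussianReal_absolutelyContinuous _ h0).trans
    (gaussianReal_absolutelyContinuous' _ (siteVar_ne_zero hd))

lemma cutOperator_apply_ae (hd : 2 ≤ d)
    (hQ : ∀ f : Lp ℝ 2 (siteLaw d), (Q f : ℝ → ℝ) =ᵐ[siteLaw d]
      fun a => ∫ y, (f : ℝ → ℝ) (a / d + Real.sqrt (1 - 1 / (d : ℝ) ^ 2) * y) ∂(siteLaw d))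
    (hPh : ∀ (h : ℝ) (f : Lp ℝ 2 (siteLaw d)), (Ph h f : ℝ → ℝ) =ᵐ[siteLaw d]
      fun a => if h ≤ a then (f : ℝ → ℝ) a else 0) (h : ℝ) (f : Lp ℝ 2 (siteLaw d)) :
    ((Ph h ∘L ((d : ℝ) • Q) ∘L Ph h) f : ℝ → ℝ) =ᵐ[siteLaw d]
      (Set.Ici h).indicator fun a => d * ∫ x, (Set.Ici h).indicator (f : ℝ → ℝ) x
        ∂(gaussianReal (a / d) (Real.toNNReal (1 / d))) := by
  have h1 := hPh h (((d : ℝ) • Q) (Ph h f))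
  have h2 := Lp.coeFn_smul (d : ℝ) (Q (Ph h f))
  filter_upwards [h1, h2, hQ (Ph h f)] with a ha1 ha2 ha3
  simp only [ContinuousLinearMap.comp_apply]
  rw [ha1, Set.indicator_apply]
  simp only [Set.mem_Ici]
  congr 1
  rw [smul_apply, ha2, Pi.smul_apply, ha3, smul_eq_mul]
  congr 1
  rw [← map_siteLaw hd a, ← integral_map (φ := fun y => a / d + √(1 - 1 / (d : ℝ) ^ 2) * y)
    (by fun_prop) (Lp.stronglyMeasurable (Ph h f)).aestronglyMeasurable, map_siteLaw hd a]
  refine integral_congr_ae ?_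
  filter_upwards [(gaussianReal_absolutelyContinuous_siteLaw hd a).ae_le (hPh h f)] with x hx
  rw [hx, Set.indicator_apply]
  rfl

lemma transOp_ne_top {ν : Measure ℝ} {K : ℝ → ℝ → ℝ≥0∞} (hK : IsSymmDensity ν K)
    {F : ℝ → ℝ≥0∞} (hF : Measurable F) (hF2 : ∫⁻ a, F a ^ 2 ∂ν ≠ ∞) (a : ℝ) :
    transOp ν K F a ≠ ∞ := by
  obtain ⟨κ, hκm, hκ2, hle, hloc⟩ := hK.exists_dominating
  obtain ⟨C, hC, h1⟩ := hloc |a|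
  have hint : ∫⁻ z, κ z * F z ∂ν ≠ ∞ := by
    have := (sq_lintegral_mul_le hκm hF).trans_lt (ENNReal.mul_lt_top hκ2.lt_top hF2.lt_top)
    intro h; simp [h] at this
  refine ((lintegral_mono (g := fun z => C * (κ z * F z)) fun z => ?_).trans_lt ?_).ne
  · dsimp only
    rw [← mul_assoc]
    exact mul_le_mul_left ((hle a z).trans (mul_le_mul_left (h1 a le_rfl) _)) _
  · rw [lintegral_const_mul' _ _ hC]
    exact ENNReal.mul_lt_top hC.lt_top hint.lt_top

lemma lintegral_sq_cutOp_le (hd : 2 ≤ d)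
    (hQ : ∀ f : Lp ℝ 2 (siteLaw d), (Q f : ℝ → ℝ) =ᵐ[siteLaw d]
      fun a => ∫ y, (f : ℝ → ℝ) (a / d + Real.sqrt (1 - 1 / (d : ℝ) ^ 2) * y) ∂(siteLaw d))
    (hPh : ∀ (h : ℝ) (f : Lp ℝ 2 (siteLaw d)), (Ph h f : ℝ → ℝ) =ᵐ[siteLaw d]
      fun a => if h ≤ a then (f : ℝ → ℝ) a else 0) (h : ℝ) {F : ℝ → ℝ≥0∞} (hF : Measurable F)
    (hF2 : ∫⁻ a, F a ^ 2 ∂(siteLaw d) ≠ ∞) :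
    ∫⁻ a, cutOp (siteLaw d) (mehler d) d (Set.Ici h) F a ^ 2 ∂(siteLaw d) ≤
      ENNReal.ofReal ‖Ph h ∘L ((d : ℝ) • Q) ∘L Ph h‖ ^ 2 * ∫⁻ a, F a ^ 2 ∂(siteLaw d) := by
  have hK := isSymmDensity_mehler hd
  have hfin : ∀ᵐ a ∂(siteLaw d), F a < ∞ := by
    filter_upwards [ae_lt_top (hF.pow_const 2) hF2] with a ha
    by_contra h'
    simp [not_lt_top_iff.1 h'] at ha
  have hmem : MemLp (fun a => (F a).toReal) 2 (siteLaw d) := by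
    refine ⟨hF.ennreal_toReal.aestronglyMeasurable, ?_⟩
    rw [eLpNorm_lt_top_iff_lintegral_rpow_enorm_lt_top (by simp) (by simp)]
    refine lt_of_le_of_lt (lintegral_mono fun a => ?_) hF2.lt_top
    simp only [ENNReal.toReal_ofNat]
    rw [show (2 : ℝ) = (2 : ℕ) by norm_num, ENNReal.rpow_natCast]
    gcongr
    rw [Real.enorm_of_nonneg ENNReal.toReal_nonneg]
    exact ENNReal.ofReal_toReal_le
  set f := hmem.toLp
  set T := Ph h ∘L ((d : ℝ) • Q) ∘L Ph h
  have hf : (f : ℝ → ℝ) =ᵐ[siteLaw d] fun a => (F a).toReal := hmem.coeFn_toLp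
  have hfF : ∫⁻ a, ‖f a‖ₑ ^ 2 ∂(siteLaw d) = ∫⁻ a, F a ^ 2 ∂(siteLaw d) := by
    refine lintegral_congr_ae ?_
    filter_upwards [hf, hfin] with a ha hlt
    rw [ha, Real.enorm_of_nonneg ENNReal.toReal_nonneg, ENNReal.ofReal_toReal hlt.ne]
  have hTF : ∫⁻ a, ‖T f a‖ₑ ^ 2 ∂(siteLaw d) =
      ∫⁻ a, cutOp (siteLaw d) (mehler d) d (Set.Ici h) F a ^ 2 ∂(siteLaw d) := by
    refine lintegral_congr_ae ?_
    filter_upwards [cutOperator_apply_ae hd hQ hPh h f] with a ha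
    rw [ha, cutOp]
    by_cases hah : a ∈ Set.Ici h
    · rw [Set.indicator_of_mem hah, Set.indicator_of_mem hah]
      have hind : ∫⁻ a, (Set.Ici h).indicator F a ^ 2 ∂(siteLaw d) ≠ ∞ :=
        ((lintegral_mono fun a => pow_le_pow_left' (Set.indicator_le_self _ _ a) 2).trans_lt
          hF2.lt_top).ne
      have hac := (gaussianReal_absolutelyContinuous_siteLaw hd a).ae_le
      have e1 : ∫ x, (Set.Ici h).indicator (f : ℝ → ℝ) x
          ∂(gaussianReal (a / d) (Real.toNNReal (1 / d))) =
          (transOp (siteLaw d) (mehler d) ((Set.Ici h).indicator F) a).toReal := by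
        rw [transOp_mehler hd (hF.indicator measurableSet_Ici), ← integral_toReal
          (hF.indicator measurableSet_Ici).aemeasurable]
        · refine integral_congr_ae ?_
          filter_upwards [hac hf] with x hx
          by_cases hxh : x ∈ Set.Ici h
          · simp only [Set.indicator_of_mem hxh]; exact hx
          · simp [Set.indicator_of_notMem hxh]
        · filter_upwards [hac hfin] with x hx
          exact (Set.indicator_le_self _ _ x).trans_lt hx
      rw [e1, enorm_mul, Real.enorm_of_nonneg ENNReal.toReal_nonneg,
        ENNReal.ofReal_toReal (transOp_ne_top hK (hF.indicator measurableSet_Ici) hind a),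
        Real.enorm_of_nonneg (by positivity), ENNReal.ofReal_natCast]
    · rw [Set.indicator_of_notMem hah, Set.indicator_of_notMem hah]
      simp
  rw [← hTF, ← hfF, ← enorm_sq_eq_lintegral, ← enorm_sq_eq_lintegral, ← mul_pow]
  gcongr
  rw [ofReal_norm]
  exact ContinuousLinearMap.le_opENorm _ _

lemma exists_lt_lintegral_sq_cutOp (hd : 2 ≤ d)
    (hQ : ∀ f : Lp ℝ 2 (siteLaw d), (Q f : ℝ → ℝ) =ᵐ[siteLaw d]
      fun a => ∫ y, (f : ℝ → ℝ) (a / d + Real.sqrt (1 - 1 / (d : ℝ) ^ 2) * y) ∂(siteLaw d))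
    (hPh : ∀ (h : ℝ) (f : Lp ℝ 2 (siteLaw d)), (Ph h f : ℝ → ℝ) =ᵐ[siteLaw d]
      fun a => if h ≤ a then (f : ℝ → ℝ) a else 0) (h : ℝ) {r : ℝ} (hr0 : 0 ≤ r)
    (hr : r < ‖Ph h ∘L ((d : ℝ) • Q) ∘L Ph h‖) :
    ∃ F : ℝ → ℝ≥0∞, Measurable F ∧ ∫⁻ a, F a ^ 2 ∂(siteLaw d) ≠ ∞ ∧
      ENNReal.ofReal r ^ 2 * ∫⁻ a, F a ^ 2 ∂(siteLaw d) <
        ∫⁻ a, cutOp (siteLaw d) (mehler d) d (Set.Ici h) F a ^ 2 ∂(siteLaw d) := by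
  set T := Ph h ∘L ((d : ℝ) • Q) ∘L Ph h
  obtain ⟨f, hf⟩ : ∃ f, r * ‖f‖ < ‖T f‖ := by
    by_contra! hcon
    exact hr.not_ge (T.opNorm_le_bound hr0 hcon)
  have hfm : Measurable fun a => ‖f a‖ₑ := (Lp.stronglyMeasurable f).measurable.enorm
  refine ⟨fun a => ‖f a‖ₑ, hfm, ?_, ?_⟩
  · rw [← enorm_sq_eq_lintegral]; finiteness
  · have hlt : ENNReal.ofReal r * ‖f‖ₑ < ‖T f‖ₑ := by
      rw [← ofReal_norm, ← ofReal_norm, ← ENNReal.ofReal_mul hr0]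
      exact (ENNReal.ofReal_lt_ofReal_iff ((by positivity : 0 ≤ r * ‖f‖).trans_lt hf)).2 hf
    rw [← enorm_sq_eq_lintegral, ← mul_pow]
    refine (ENNReal.pow_right_strictMono two_ne_zero hlt).trans_le ?_
    dsimp only
    rw [enorm_sq_eq_lintegral]
    refine lintegral_mono_ae ?_
    filter_upwards [cutOperator_apply_ae hd hQ hPh h f] with a ha
    gcongr
    rw [ha, cutOp]
    by_cases hah : a ∈ Set.Ici h
    · rw [Set.indicator_of_mem hah, Set.indicator_of_mem hah, enorm_mul,
        Real.enorm_of_nonneg (by positivity), ENNReal.ofReal_natCast,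
        transOp_mehler hd (hfm.indicator measurableSet_Ici)]
      gcongr
      refine (enorm_integral_le_lintegral_enorm _).trans_eq (lintegral_congr fun x => ?_)
      exact enorm_indicator_eq_indicator_enorm _ _
    · rw [Set.indicator_of_notMem hah, Set.indicator_of_notMem hah]
      simp

/-- The norms of the operators cut at height `h` decrease strictly in `h` where positive. -/
lemma norm_cutOperator_lt (hd : 2 ≤ d)
    (hQ : ∀ f : Lp ℝ 2 (siteLaw d), (Q f : ℝ → ℝ) =ᵐ[siteLaw d]
      fun a => ∫ y, (f : ℝ → ℝ) (a / d + Real.sqrt (1 - 1 / (d : ℝ) ^ 2) * y) ∂(siteLaw d))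
    (hPh : ∀ (h : ℝ) (f : Lp ℝ 2 (siteLaw d)), (Ph h f : ℝ → ℝ) =ᵐ[siteLaw d]
      fun a => if h ≤ a then (f : ℝ → ℝ) a else 0) {h h' : ℝ} (hh : h < h')
    (hpos : 0 < ‖Ph h' ∘L ((d : ℝ) • Q) ∘L Ph h'‖) :
    ‖Ph h' ∘L ((d : ℝ) • Q) ∘L Ph h'‖ < ‖Ph h ∘L ((d : ℝ) • Q) ∘L Ph h‖ := by
  set l' := ‖Ph h' ∘L ((d : ℝ) • Q) ∘L Ph h'‖ with hl'
  set l := ‖Ph h ∘L ((d : ℝ) • Q) ∘L Ph h‖ with hl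
  have hK := isSymmDensity_mehler hd
  have := isOpenPosMeasure_siteLaw hd
  have hd0 : (d : ℝ≥0∞) ≠ 0 := by simp; omega
  obtain ⟨δ, hδ, hgain⟩ := exists_gain (ε := ENNReal.ofReal (l' / 2) ^ 2) hK hd0 (by simp) hh
    (by simp [hpos]) (by simp)
  set η := (min δ 1).toReal with hη
  have hηt : min δ 1 ≠ ∞ := ((min_le_right δ 1).trans_lt ENNReal.one_lt_top).ne
  have hη0 : 0 < η := ENNReal.toReal_pos (by simp [hδ]) hηt
  have hηδ : ENNReal.ofReal η ≤ δ := by rw [hη, ENNReal.ofReal_toReal hηt]; exact min_le_left _ _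
  have key : ∀ r, l' / 2 ≤ r → r < l' → r ^ 2 + η ≤ l ^ 2 := fun r hr1 hr2 => by
    have hr0 : 0 ≤ r := by linarith
    obtain ⟨F, hFm, hF2, hF⟩ := exists_lt_lintegral_sq_cutOp hd hQ hPh h' hr0 hr2
    set N := ∫⁻ a, F a ^ 2 ∂(siteLaw d)
    have hN0 : N ≠ 0 := fun h0 => by
      have := hF.trans_le (lintegral_sq_cutOp_le hd hQ hPh h' hFm hF2)
      simp [N, h0] at this
    have h1 := hgain F hFm hF2 (le_trans (by gcongr) hF.le)
    have h2 : ∫⁻ a, (Set.Ici h').indicator F a ^ 2 ∂(siteLaw d) ≤ N :=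
      lintegral_mono fun a => pow_le_pow_left' (Set.indicator_le_self _ _ a) 2
    have h3 := lintegral_sq_cutOp_le hd hQ hPh h (hFm.indicator measurableSet_Ici)
      (h2.trans_lt hF2.lt_top).ne
    have h4 : (ENNReal.ofReal r ^ 2 + ENNReal.ofReal η) * N ≤ ENNReal.ofReal l ^ 2 * N := by
      calc _ = ENNReal.ofReal r ^ 2 * N + ENNReal.ofReal η * N := add_mul _ _ _
        _ ≤ _ := add_le_add hF.le (mul_le_mul_left hηδ _)
        _ ≤ _ := h1.trans h3
        _ ≤ _ := by gcongr
    have h5 := (ENNReal.mul_le_mul_iff_left hN0 hF2).1 h4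
    rw [← ENNReal.ofReal_pow hr0, ← ENNReal.ofReal_pow (norm_nonneg _),
      ← ENNReal.ofReal_add (by positivity) hη0.le,
      ENNReal.ofReal_le_ofReal_iff (by positivity)] at h5
    exact h5
  have hlim : l' ^ 2 + η ≤ l ^ 2 := by
    have ht : Filter.Tendsto (fun r : ℝ => r ^ 2 + η) (nhdsWithin l' (Set.Iio l'))
        (nhds (l' ^ 2 + η)) := by
      have : Continuous fun r : ℝ => r ^ 2 + η := by fun_prop
      exact this.continuousAt.tendsto.mono_left nhdsWithin_le_nhds
    refine le_of_tendsto ht ?_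
    filter_upwards [Ioo_mem_nhdsLT (show l' / 2 < l' by linarith)] with r hr
    exact key r hr.1.le hr.2
  exact lt_of_pow_lt_pow_left₀ 2 (norm_nonneg _) (by linarith)

end Bridge

section Criteria

variable {d : ℕ} {Q : Lp ℝ 2 (siteLaw d) →L[ℝ] Lp ℝ 2 (siteLaw d)}
  {Ph : ℝ → (Lp ℝ 2 (siteLaw d) →L[ℝ] Lp ℝ 2 (siteLaw d))}

lemma tendsto_lintegral_iterate_cutOp (hd : 2 ≤ d)
    (hQ : ∀ f : Lp ℝ 2 (siteLaw d), (Q f : ℝ → ℝ) =ᵐ[siteLaw d]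
      fun a => ∫ y, (f : ℝ → ℝ) (a / d + Real.sqrt (1 - 1 / (d : ℝ) ^ 2) * y) ∂(siteLaw d))
    (hPh : ∀ (h : ℝ) (f : Lp ℝ 2 (siteLaw d)), (Ph h f : ℝ → ℝ) =ᵐ[siteLaw d]
      fun a => if h ≤ a then (f : ℝ → ℝ) a else 0) {h : ℝ}
    (hlt : ‖Ph h ∘L ((d : ℝ) • Q) ∘L Ph h‖ < 1) :
    Filter.Tendsto (fun n => ∫⁻ a, (cutOp (siteLaw d) (mehler d) d (Set.Ici h))^[n]
      ((Set.Ici h).indicator 1) a ∂(siteLaw d)) Filter.atTop (nhds 0) := by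
  set l := ENNReal.ofReal ‖Ph h ∘L ((d : ℝ) • Q) ∘L Ph h‖ with hl
  have hK := isSymmDensity_mehler hd
  set A := cutOp (siteLaw d) (mehler d) d (Set.Ici h)
  set u : ℕ → ℝ → ℝ≥0∞ := fun n => A^[n] ((Set.Ici h).indicator 1) with hu
  have hum : ∀ n, Measurable (u n) :=
    measurable_iterate_cutOp hK d measurableSet_Ici (measurable_one.indicator measurableSet_Ici)
  have hsq : ∀ n, ∫⁻ a, u n a ^ 2 ∂(siteLaw d) ≤ (l ^ n) ^ 2 := fun n => by
    induction n with
    | zero =>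
      refine (lintegral_mono (g := fun _ => 1) fun a => ?_).trans (by simp)
      exact pow_le_one' (Set.indicator_le_self (Set.Ici h) (1 : ℝ → ℝ≥0∞) a) 2
    | succ n ih =>
      simp only [hu, Function.iterate_succ_apply']
      refine (lintegral_sq_cutOp_le hd hQ hPh h (hum n) (ih.trans_lt ?_).ne).trans ?_
      · finiteness
      · rw [pow_succ' l n, mul_pow l]
        exact mul_le_mul_right ih _
  have hle : ∀ n, ∫⁻ a, u n a ∂(siteLaw d) ≤ l ^ n := fun n => by
    refine (ENNReal.pow_right_strictMono two_ne_zero).le_iff_le.1 ?_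
    have := sq_lintegral_mul_le (ν := siteLaw d) (measurable_const (a := (1 : ℝ≥0∞))) (hum n)
    simp only [one_mul, one_pow, lintegral_const, measure_univ, mul_one] at this
    exact this.trans (hsq n)
  refine tendsto_of_tendsto_of_tendsto_of_le_of_le tendsto_const_nhds
    (ENNReal.tendsto_pow_atTop_nhds_zero_of_lt_one ?_) (fun _ => zero_le) hle
  rw [hl, ENNReal.ofReal_lt_one]
  exact hlt

lemma exists_supersolution_of_one_lt_norm (hd : 2 ≤ d)
    (hQ : ∀ f : Lp ℝ 2 (siteLaw d), (Q f : ℝ → ℝ) =ᵐ[siteLaw d]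
      fun a => ∫ y, (f : ℝ → ℝ) (a / d + Real.sqrt (1 - 1 / (d : ℝ) ^ 2) * y) ∂(siteLaw d))
    (hPh : ∀ (h : ℝ) (f : Lp ℝ 2 (siteLaw d)), (Ph h f : ℝ → ℝ) =ᵐ[siteLaw d]
      fun a => if h ≤ a then (f : ℝ → ℝ) a else 0) {h : ℝ}
    (hlt : 1 < ‖Ph h ∘L ((d : ℝ) • Q) ∘L Ph h‖) :
    ∃ s : ℝ → ℝ≥0∞, Measurable s ∧ (∀ a, s a ≤ 1) ∧ (∀ a < h, s a = 1) ∧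
      (∀ a, transOp (siteLaw d) (mehler d) s a ^ d ≤ s a) ∧
      Filter.Tendsto (fun n => ∫⁻ a, (fun f a => transOp (siteLaw d) (mehler d) f a ^ d)^[n] s a
        ∂(siteLaw d)) Filter.atTop (nhds 0) := by
  have hK := isSymmDensity_mehler hd
  have hd0 : d ≠ 0 := by omega
  obtain ⟨r, hr1, hr⟩ := exists_between hlt
  obtain ⟨F, hFm, hF2, hF⟩ := exists_lt_lintegral_sq_cutOp hd hQ hPh h (by linarith) hr
  have hr1' : 1 < ENNReal.ofReal r ^ 2 :=
    one_lt_pow' (ENNReal.one_lt_ofReal.2 hr1) two_ne_zero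
  obtain ⟨g, hgm, hg1, hgh, hg0, m, hm1, hm, hmg⟩ := exists_subsolution hK
    (by exact_mod_cast hd0) (by simp) hFm hF2 hr1' hF
  obtain ⟨s, hsm, hs1, hsg, hs0, hsup⟩ := exists_supersolution hK hd0 hgm hg1 hg0 hm1 hm hmg
  refine ⟨s, hsm, hs1, fun a ha => hsg a ?_, hsup,
    tendsto_lintegral_iterate_zero hK hd hsm hs1 hs0 hsup⟩
  by_contra h'
  exact (hgh a h').not_gt ha

end Criteria

section Tree

variable {V : Type*} {G : SimpleGraph V}

open Classical in
/-- The neighbour of `y` closer to the root `o`. -/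
noncomputable def parent (G : SimpleGraph V) (o y : V) : V :=
  if h : ∃ x, G.Adj x y ∧ G.dist o y = G.dist o x + 1 then h.choose else y

lemma exists_adj_dist_eq (hG : G.Connected) {o y : V} (hy : y ≠ o) :
    ∃ x, G.Adj x y ∧ G.dist o y = G.dist o x + 1 := by
  obtain ⟨p, hp⟩ := hG.exists_walk_length_eq_dist y o
  obtain ⟨x, hx, q, rfl⟩ := SimpleGraph.Walk.exists_eq_cons_of_ne hy p
  refine ⟨x, hx.symm, ?_⟩
  rw [SimpleGraph.Walk.length_cons] at hp
  have h1 : G.dist x o ≤ q.length := SimpleGraph.dist_le q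
  have h2 : G.dist y o ≤ G.dist x o + 1 := by
    have := hG.dist_triangle (u := y) (v := x) (w := o)
    rw [SimpleGraph.dist_eq_one_iff_adj.2 hx] at this
    omega
  rw [SimpleGraph.dist_comm (u := o) (v := y), SimpleGraph.dist_comm (u := o) (v := x)]
  omega

lemma parent_adj (hG : G.Connected) {o y : V} (hy : y ≠ o) : G.Adj (parent G o y) y := by
  have h := exists_adj_dist_eq hG hy
  rw [parent, dif_pos h]
  exact h.choose_spec.1

lemma dist_parent (hG : G.Connected) {o y : V} (hy : y ≠ o) :
    G.dist o y = G.dist o (parent G o y) + 1 := by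
  have h := exists_adj_dist_eq hG hy
  rw [parent, dif_pos h]
  exact h.choose_spec.2

lemma exists_isPath_penultimate (hG : G.Connected) {o x y : V} (h : G.Adj x y)
    (hd : G.dist o y = G.dist o x + 1) : ∃ p : G.Walk o y, p.IsPath ∧ p.penultimate = x := by
  obtain ⟨p, hp⟩ := hG.exists_walk_length_eq_dist o x
  refine ⟨p.concat h, ?_, p.penultimate_concat h⟩
  apply SimpleGraph.Walk.isPath_of_length_eq_dist
  rw [SimpleGraph.Walk.length_concat, hp, hd]

lemma penultimate_eq_parent (hG : G.IsTree) {o y : V} (hy : y ≠ o) {p : G.Walk o y}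
    (hp : p.IsPath) : p.penultimate = parent G o y := by
  obtain ⟨q, hq, hq'⟩ := exists_isPath_penultimate hG.connected (parent_adj hG.connected hy)
    (dist_parent hG.connected hy)
  have := (hG.isAcyclic.subsingleton_path o y).elim ⟨p, hp⟩ ⟨q, hq⟩
  rw [← hq', Subtype.mk.inj this]

lemma eq_parent (hG : G.IsTree) {o x y : V} (h : G.Adj x y)
    (hd : G.dist o y = G.dist o x + 1) : x = parent G o y := by
  obtain ⟨p, hp, hp'⟩ := exists_isPath_penultimate hG.connected h hd
  have hy : y ≠ o := by rintro rfl; simp at hd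
  rw [← hp', penultimate_eq_parent hG hy hp]

lemma dist_eq_add_of_descendant (hG : G.IsTree) {o x y z : V} (h : G.Adj x y)
    (hd : G.dist o y = G.dist o x + 1) (hz : G.dist z x = G.dist z y + 1) :
    G.dist o z = G.dist o y + G.dist z y := by
  obtain ⟨k, hk⟩ : ∃ k, G.dist z y = k := ⟨_, rfl⟩
  induction k generalizing x y with
  | zero =>
    obtain rfl := (hG.connected.dist_eq_zero_iff).1 hk
    simp
  | succ k ih =>
    have hyz : y ≠ z := by rintro rfl; simp at hk
    obtain ⟨y', hadj, hy'⟩ := exists_adj_dist_eq hG.connected hyz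
    have hup : G.dist o y' = G.dist o y + 1 := by
      rcases hG.dist_eq_dist_add_one_of_adj o hadj with h1 | h1
      · exact h1
      · have : y' = x := (eq_parent hG hadj h1).trans (eq_parent hG h hd).symm
        subst this
        omega
    rw [ih hadj.symm hup hy' (by omega)]
    omega

/-- A vertex at level at most that of `y`, other than `y`, connects to `y` through its parent. -/
lemma dist_eq_dist_parent_add_one (hG : G.IsTree) {o y z : V} (hy : y ≠ o) (hzy : z ≠ y)
    (hz : G.dist o z ≤ G.dist o y) : G.dist z y = G.dist z (parent G o y) + 1 := by
  have hadj := parent_adj hG.connected hy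
  rcases hG.dist_eq_dist_add_one_of_adj z hadj with h1 | h1
  · have h2 := dist_eq_add_of_descendant hG hadj (dist_parent hG.connected hy) h1
    exact absurd ((hG.connected.dist_eq_zero_iff).1 (by omega : G.dist z y = 0)) hzy
  · exact h1

lemma exists_walk_of_induce {S : Set V} {a b : S} (p : (G.induce S).Walk a b) :
    ∃ q : G.Walk (a : V) b, ∀ v ∈ q.support, v ∈ S := by
  induction p with
  | @nil a => exact ⟨.nil, by simp⟩
  | @cons a b c h p ih =>
    obtain ⟨q, hq⟩ := ih
    have h' : G.Adj (a : V) b := h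
    refine ⟨.cons h' q, fun v hv => ?_⟩
    rw [SimpleGraph.Walk.support_cons, List.mem_cons] at hv
    rcases hv with rfl | hv
    · exact a.2
    · exact hq v hv

lemma parent_mem_of_connected (hG : G.IsTree) {S : Set V} (hS : (G.induce S).Connected) {o y : V}
    (ho : o ∈ S) (hy : y ∈ S) (hyo : y ≠ o) : parent G o y ∈ S := by
  classical
  obtain ⟨p⟩ := hS.preconnected ⟨o, ho⟩ ⟨y, hy⟩
  obtain ⟨q, hq⟩ := exists_walk_of_induce p
  rw [← penultimate_eq_parent hG hyo q.bypass_isPath]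
  exact hq _ (q.support_bypass_subset_support (SimpleGraph.Walk.getVert_mem_support _ _))

variable [∀ v : V, Fintype (G.neighborSet v)]

/-- The neighbours of `x` farther from the root `o`. -/
noncomputable def children (G : SimpleGraph V) [∀ v : V, Fintype (G.neighborSet v)] (o x : V) :
    Finset V :=
  (G.neighborFinset x).filter fun y => G.dist o y = G.dist o x + 1

lemma mem_children (hG : G.IsTree) {o x y : V} :
    y ∈ children G o x ↔ y ≠ o ∧ parent G o y = x := by
  rw [children, Finset.mem_filter, SimpleGraph.mem_neighborFinset]
  constructor
  · rintro ⟨h1, h2⟩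
    exact ⟨by rintro rfl; simp at h2, (eq_parent hG h1 h2).symm⟩
  · rintro ⟨h1, rfl⟩
    exact ⟨parent_adj hG.connected h1, dist_parent hG.connected h1⟩

lemma card_children_root {d : ℕ} (hreg : G.IsRegularOfDegree (d + 1)) (o : V) :
    (children G o o).card = d + 1 := by
  rw [← hreg o, ← SimpleGraph.card_neighborFinset_eq_degree, children,
    Finset.filter_true_of_mem]
  intro y hy
  rw [SimpleGraph.mem_neighborFinset] at hy
  simp [SimpleGraph.dist_eq_one_iff_adj.2 hy]

lemma card_children (hG : G.IsTree) {d : ℕ} (hreg : G.IsRegularOfDegree (d + 1)) {o x : V}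
    (hx : x ≠ o) : (children G o x).card = d := by
  classical
  have h : children G o x = (G.neighborFinset x).erase (parent G o x) := by
    ext y
    rw [children, Finset.mem_filter, Finset.mem_erase, SimpleGraph.mem_neighborFinset]
    constructor
    · rintro ⟨h1, h2⟩
      refine ⟨?_, h1⟩
      rintro rfl
      have := dist_parent hG.connected hx
      omega
    · rintro ⟨h1, h2⟩
      refine ⟨h2, (hG.dist_eq_dist_add_one_of_adj o h2).resolve_left fun h3 => h1 ?_⟩
      exact eq_parent hG h2.symm h3
  have hmem : parent G o x ∈ G.neighborFinset x := by
    rw [SimpleGraph.mem_neighborFinset]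
    exact (parent_adj hG.connected hx).symm
  rw [h, Finset.card_erase_of_mem hmem, SimpleGraph.card_neighborFinset_eq_degree, hreg x]
  simp

/-- The vertices at distance `n` from the root `o`. -/
noncomputable def sphere (G : SimpleGraph V) [∀ v : V, Fintype (G.neighborSet v)] (o : V) :
    ℕ → Finset V
  | 0 => {o}
  | n + 1 => open Classical in (sphere G o n).biUnion (children G o)

lemma mem_sphere (hG : G.IsTree) {o y : V} {n : ℕ} : y ∈ sphere G o n ↔ G.dist o y = n := by
  classical
  induction n generalizing y with
  | zero => rw [sphere, Finset.mem_singleton, hG.connected.dist_eq_zero_iff, eq_comm]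
  | succ n ih =>
    rw [sphere, Finset.mem_biUnion]
    constructor
    · rintro ⟨x, hx, hy⟩
      rw [ih] at hx
      rw [← hx]
      exact (Finset.mem_filter.1 hy).2
    · intro h
      have hy : y ≠ o := by rintro rfl; simp at h
      refine ⟨parent G o y, ?_, (mem_children hG).2 ⟨hy, rfl⟩⟩
      rw [ih]
      have := dist_parent hG.connected hy
      omega

lemma pairwiseDisjoint_children (hG : G.IsTree) (o : V) (s : Set V) :
    s.PairwiseDisjoint (children G o) := by
  intro x _ x' _ hne
  rw [Function.onFun, Finset.disjoint_left]
  intro y h1 h2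
  exact hne (((mem_children hG).1 h1).2.symm.trans ((mem_children hG).1 h2).2)

lemma countable_of_isTree (hG : G.IsTree) : Countable V := by
  obtain ⟨o⟩ := hG.connected.nonempty
  have : (Set.univ : Set V) ⊆ ⋃ n, (sphere G o n : Set V) := fun y _ =>
    Set.mem_iUnion.2 ⟨_, (mem_sphere hG).2 rfl⟩
  exact Set.countable_univ_iff.1
    ((Set.countable_iUnion fun n => (sphere G o n).countable_toSet).mono this)

lemma iterate_parent_mem_sphere (hG : G.IsTree) {o y : V} {n i : ℕ}
    (hy : y ∈ sphere G o (n + i)) : (parent G o)^[i] y ∈ sphere G o n := by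
  induction i generalizing y with
  | zero => exact hy
  | succ i ih =>
    rw [Function.iterate_succ_apply]
    apply ih
    rw [mem_sphere hG] at hy ⊢
    have hyo : y ≠ o := by rintro rfl; simp at hy
    have := dist_parent hG.connected hyo
    omega

/-- The vertices `y` of level `n + k` such that `ψ ≥ h` on the geodesic from level `n` to `y`. -/
noncomputable def alive (G : SimpleGraph V) [∀ v : V, Fintype (G.neighborSet v)] (o : V) (h : ℝ)
    (n k : ℕ) (ψ : V → ℝ) : Finset V :=
  open Classical in
  (sphere G o (n + k)).filter fun y => ∀ i ≤ k, h ≤ ψ ((parent G o)^[i] y)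

lemma mem_alive {o y : V} {h : ℝ} {n k : ℕ} {ψ : V → ℝ} : y ∈ alive G o h n k ψ ↔
    y ∈ sphere G o (n + k) ∧ ∀ i ≤ k, h ≤ ψ ((parent G o)^[i] y) := by
  rw [alive, Finset.mem_filter]

lemma mem_alive_zero {o y : V} {h : ℝ} {n : ℕ} {ψ : V → ℝ} : y ∈ alive G o h n 0 ψ ↔
    y ∈ sphere G o n ∧ h ≤ ψ y := by
  simp [mem_alive]

lemma le_of_mem_alive {o y : V} {h : ℝ} {n k : ℕ} {ψ : V → ℝ} (hy : y ∈ alive G o h n k ψ) :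
    h ≤ ψ y := (mem_alive.1 hy).2 0 (zero_le)

lemma mem_alive_succ (hG : G.IsTree) {o y : V} {h : ℝ} {n k : ℕ} {ψ : V → ℝ} :
    y ∈ alive G o h n (k + 1) ψ ↔
      (y ≠ o ∧ parent G o y ∈ alive G o h n k ψ) ∧ h ≤ ψ y := by
  rw [mem_alive, mem_alive, mem_sphere hG, mem_sphere hG]
  constructor
  · rintro ⟨h1, h2⟩
    have hyo : y ≠ o := by rintro rfl; simp at h1
    have := dist_parent hG.connected hyo
    exact ⟨⟨hyo, by omega, fun i hi => h2 (i + 1) (by omega)⟩, h2 0 (by omega)⟩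
  · rintro ⟨⟨hyo, h1, h2⟩, h3⟩
    have := dist_parent hG.connected hyo
    refine ⟨by omega, fun i hi => ?_⟩
    cases i with
    | zero => exact h3
    | succ i => exact h2 i (by omega)

lemma exists_infinite_connected (hG : G.IsTree) {o : V} {h : ℝ} {n : ℕ} {ψ : V → ℝ}
    (hne : ∀ k, (alive G o h n k ψ).Nonempty) :
    ∃ S : Set V, S.Infinite ∧ (∀ x ∈ S, h ≤ ψ x) ∧ (G.induce S).Connected := by
  choose y hy using hne
  have hmem : ∀ k, (parent G o)^[k] (y k) ∈ sphere G o n := fun k =>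
    iterate_parent_mem_sphere hG (mem_alive.1 (hy k)).1
  obtain ⟨⟨x, hx⟩, hinf⟩ := Finite.exists_infinite_fiber
    fun k => (⟨_, hmem k⟩ : {v // v ∈ sphere G o n})
  set S : Set V := {z | ∃ k, z ∈ alive G o h n k ψ ∧ (parent G o)^[k] z = x} with hS
  have hlev : ∀ k, G.dist o (y k) = n + k := fun k => (mem_sphere hG).1 (mem_alive.1 (hy k)).1
  have hxS : ∀ z ∈ S, h ≤ ψ z := fun z ⟨k, hk, _⟩ => le_of_mem_alive hk
  have hroot : x ∈ S := by
    obtain ⟨⟨k, hk⟩⟩ := hinf.nonempty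
    have hk' : (parent G o)^[k] (y k) = x := congrArg Subtype.val hk
    refine ⟨0, mem_alive_zero.2 ⟨hx, ?_⟩, rfl⟩
    rw [← hk']
    exact (mem_alive.1 (hy k)).2 k le_rfl
  refine ⟨S, ?_, hxS, ?_⟩
  · have hinj : Function.Injective y := fun k l hkl => by
      have := hlev k
      rw [hkl, hlev l] at this
      omega
    refine Set.Infinite.mono ?_ ((Set.infinite_coe_iff.1 hinf).image hinj.injOn)
    rintro _ ⟨k, hk, rfl⟩
    exact ⟨k, hy k, congrArg Subtype.val hk⟩
  · rw [SimpleGraph.connected_iff_exists_forall_reachable]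
    refine ⟨⟨x, hroot⟩, ?_⟩
    rintro ⟨z, k, hk, hkx⟩
    induction k generalizing z with
    | zero =>
      obtain rfl : z = x := hkx
      exact SimpleGraph.Reachable.rfl
    | succ k ih =>
      have hz := (mem_alive_succ hG).1 hk
      rw [Function.iterate_succ_apply] at hkx
      refine (ih _ hz.1.2 hkx).trans (SimpleGraph.Adj.reachable ?_)
      exact parent_adj hG.connected hz.1.1

lemma alive_nonempty_of_infinite (hG : G.IsTree) {S : Set V} (hS : (G.induce S).Connected)
    (hinf : S.Infinite) {h : ℝ} {ψ : V → ℝ} (hψ : ∀ x ∈ S, h ≤ ψ x) {o : V} (ho : o ∈ S) (k : ℕ) :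
    (alive G o h 0 k ψ).Nonempty := by
  classical
  obtain ⟨y, hyS, hy⟩ := hinf.exists_notMem_finset ((Finset.range k).biUnion (sphere G o))
  have hk : k ≤ G.dist o y := by
    by_contra! hlt
    exact hy (Finset.mem_biUnion.2 ⟨_, Finset.mem_range.2 hlt, (mem_sphere hG).2 rfl⟩)
  have hanc : ∀ i, i ≤ G.dist o y → (parent G o)^[i] y ∈ S := fun i => by
    induction i with
    | zero => exact fun _ => hyS
    | succ i ih =>
      intro hi
      rw [Function.iterate_succ_apply']
      refine parent_mem_of_connected hG hS ho (ih (by omega)) fun heq => ?_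
      have h1 : (parent G o)^[i] y ∈ sphere G o (G.dist o y - i) :=
        iterate_parent_mem_sphere hG ((mem_sphere hG).2 (by omega))
      rw [heq, mem_sphere hG, SimpleGraph.dist_self] at h1
      omega
  refine ⟨(parent G o)^[G.dist o y - k] y, mem_alive.2 ⟨?_, fun i hi => ?_⟩⟩
  · exact iterate_parent_mem_sphere hG ((mem_sphere hG).2 (by omega))
  · rw [← Function.iterate_add_apply]
    exact hψ _ (hanc _ (by omega))

end Tree

/-- `φ` is a Gaussian free field on the `(d+1)`-regular tree `G`. -/
structure IsFreeField (d : ℕ) {V Ω : Type*} (G : SimpleGraph V) [MeasurableSpace Ω] (P : Measure Ω)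
    (φ : V → Ω → ℝ) : Prop where
  measurable : ∀ x, Measurable (φ x)
  map_sum : ∀ (s : Finset V) (c : V → ℝ),
      Measure.map (fun ω => ∑ x ∈ s, c x * φ x ω) P =
        gaussianReal 0 (Real.toNNReal (∑ x ∈ s, ∑ y ∈ s,
          c x * c y * (((d : ℝ) / ((d : ℝ) ^ 2 - 1)) * (1 / (d : ℝ)) ^ (G.dist x y))))

namespace IsFreeField

variable {d : ℕ} {V Ω : Type*} {G : SimpleGraph V} [MeasurableSpace Ω] {P : Measure Ω}
  {φ : V → Ω → ℝ}

lemma map_eq (hφ : IsFreeField d G P φ) (x : V) : P.map (φ x) = siteLaw d := by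
  simpa [siteLaw] using hφ.map_sum {x} fun _ => 1

lemma lintegral_comp (hφ : IsFreeField d G P φ) (x : V) {f : ℝ → ℝ≥0∞} (hf : Measurable f) :
    ∫⁻ ω, f (φ x ω) ∂P = ∫⁻ a, f a ∂siteLaw d := by
  rw [← hφ.map_eq x, lintegral_map hf (hφ.measurable x)]

lemma isGaussianProcess (hφ : IsFreeField d G P φ) : IsGaussianProcess φ P := by
  classical
  refine ⟨fun I => ⟨isGaussian_of_map_eq_gaussianReal fun L => ?_⟩⟩
  have hm : Measurable fun ω => I.restrict (φ · ω) :=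
    measurable_pi_lambda _ fun i => hφ.measurable i
  rw [Measure.map_map L.continuous.measurable hm]
  refine ⟨_, _, Eq.trans ?_
    (hφ.map_sum I fun x => if hx : x ∈ I then L (Pi.single ⟨x, hx⟩ 1) else 0)⟩
  congr 1
  ext ω
  have h1 : I.restrict (φ · ω) = ∑ x : I, φ x ω • (Pi.single x 1 : I → ℝ) := by
    ext i
    simp [Pi.single_apply, Finset.sum_apply]
  rw [Function.comp_apply, h1, _root_.map_sum, ← Finset.sum_coe_sort I]
  refine Finset.sum_congr rfl fun x _ => ?_
  rw [map_smul, smul_eq_mul, mul_comm, dif_pos x.2]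

lemma variance_eq (hφ : IsFreeField d G P φ) (s : Finset V) (c : V → ℝ) :
    Var[fun ω => ∑ x ∈ s, c x * φ x ω; P] = Real.toNNReal (∑ x ∈ s, ∑ y ∈ s,
      c x * c y * (((d : ℝ) / ((d : ℝ) ^ 2 - 1)) * (1 / (d : ℝ)) ^ (G.dist x y))) := by
  have hm : Measurable fun ω => ∑ x ∈ s, c x * φ x ω :=
    Finset.measurable_sum _ fun x _ => (hφ.measurable x).const_mul _
  rw [← variance_id_gaussianReal (μ := 0), ← hφ.map_sum, variance_map aemeasurable_id hm.aemeasurable]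
  rfl

lemma covariance_eq (hφ : IsFreeField d G P φ) (hd : 2 ≤ d) (x y : V) :
    cov[φ x, φ y; P] = ((d : ℝ) / ((d : ℝ) ^ 2 - 1)) * (1 / (d : ℝ)) ^ (G.dist x y) := by
  classical
  have := hφ.isGaussianProcess.isProbabilityMeasure
  have h2 : ∀ x, MemLp (φ x) 2 P := fun x =>
    (hφ.isGaussianProcess.hasGaussianLaw_eval x).memLp_two
  have hv : ∀ x, Var[φ x; P] = (d : ℝ) / ((d : ℝ) ^ 2 - 1) := fun x => by
    have := hφ.variance_eq {x} fun _ => 1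
    simpa [Real.coe_toNNReal _ (siteVar_pos hd).le, (siteVar_pos hd).le] using this
  by_cases hxy : x = y
  · subst hxy
    rw [covariance_self (hφ.measurable x).aemeasurable, hv]
    simp
  · have h := hφ.variance_eq {x, y} fun _ => 1
    have hpos : 0 ≤ (d : ℝ) / ((d : ℝ) ^ 2 - 1) * (1 / (d : ℝ)) ^ (G.dist x y) :=
      mul_nonneg (siteVar_pos hd).le (by positivity)
    have hp := siteVar_pos hd
    simp only [Finset.sum_pair hxy, one_mul, SimpleGraph.dist_self, pow_zero, mul_one,
      G.dist_comm (u := y) (v := x)] at h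
    rw [Real.coe_toNNReal _ (by linarith), variance_fun_add (h2 x) (h2 y), hv, hv] at h
    linarith

/-- The increment of the field from the parent of `y` to `y`. -/
noncomputable def innov (d : ℕ) (G : SimpleGraph V) (φ : V → Ω → ℝ) (o y : V) (ω : Ω) : ℝ :=
  φ y ω - (1 / d) * φ (parent G o y) ω

lemma measurable_innov (hφ : IsFreeField d G P φ) (o y : V) : Measurable (innov d G φ o y) :=
  (hφ.measurable y).sub ((hφ.measurable _).const_mul _)

lemma map_innov (hφ : IsFreeField d G P φ) (hd : 2 ≤ d) (hG : G.IsTree) {o y : V} (hy : y ≠ o) :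
    P.map (innov d G φ o y) = gaussianReal 0 (Real.toNNReal (1 / d)) := by
  classical
  have hadj := parent_adj hG.connected hy
  have hne : y ≠ parent G o y := hadj.ne'
  have h := hφ.map_sum {y, parent G o y} fun x => if x = y then 1 else -(1 / d)
  simp only [Finset.sum_pair hne, if_true, if_neg hne.symm, SimpleGraph.dist_self,
    SimpleGraph.dist_eq_one_iff_adj.2 hadj, SimpleGraph.dist_eq_one_iff_adj.2 hadj.symm] at h
  have h2 : (2 : ℝ) ≤ d := by exact_mod_cast hd
  have hD : (d : ℝ) ^ 2 - 1 ≠ 0 := by nlinarith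
  convert h using 2
  · ext ω
    simp only [innov]
    ring
  · congr 1
    field_simp
    ring

/-- The σ-algebra generated by the field on `W`. -/
abbrev past (φ : V → Ω → ℝ) (W : Set V) : MeasurableSpace Ω :=
  MeasurableSpace.comap (fun ω (z : W) => φ z ω) MeasurableSpace.pi

omit [MeasurableSpace Ω] in
lemma measurable_past {W : Set V} {z : V} (hz : z ∈ W) : Measurable[past φ W] (φ z) :=
  (measurable_pi_apply (⟨z, hz⟩ : W)).comp (comap_measurable fun ω (z : W) => φ z ω)

omit [MeasurableSpace Ω] in
lemma past_mono {W W' : Set V} (h : W ⊆ W') : past φ W ≤ past φ W' := by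
  rw [← measurable_iff_comap_le]
  exact @measurable_pi_lambda _ _ _ (past φ W') _ _ fun z => measurable_past (h z.2)

lemma past_le (hφ : IsFreeField d G P φ) (W : Set V) : past φ W ≤ ‹MeasurableSpace Ω› :=
  measurable_iff_comap_le.1 (measurable_pi_lambda _ fun z => hφ.measurable z)

lemma indep_innov (hφ : IsFreeField d G P φ) (hd : 2 ≤ d) (hG : G.IsTree) {o y : V}
    (hy : y ≠ o) {W : Set V} (hW : ∀ z ∈ W, z ≠ y ∧ G.dist o z ≤ G.dist o y) :
    Indep (MeasurableSpace.comap (innov d G φ o y) inferInstance) (past φ W) P := by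
  classical
  have hP := hφ.isGaussianProcess.isProbabilityMeasure
  have h2 : ∀ x, MemLp (φ x) 2 P := fun x =>
    (hφ.isGaussianProcess.hasGaussianLaw_eval x).memLp_two
  have hgp : IsGaussianProcess
      (Sum.elim (fun _ : Unit => innov d G φ o y) fun z : W => φ z) P := by
    refine hφ.isGaussianProcess.of_isGaussianProcess ?_
    rintro (_ | z)
    · refine ⟨{y, parent G o y},
        ContinuousLinearMap.proj (R := ℝ) (φ := fun _ => ℝ) ⟨y, by simp⟩ -
          (1 / d : ℝ) • ContinuousLinearMap.proj (R := ℝ) (φ := fun _ => ℝ)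
            ⟨parent G o y, by simp⟩, fun ω => ?_⟩
      simp [innov]
    · exact ⟨{z.1}, ContinuousLinearMap.proj (R := ℝ) (φ := fun _ => ℝ) ⟨z.1, by simp⟩,
        fun ω => by simp⟩
  have h := hgp.indepFun_of_covariance_eq_zero
    (fun _ => (hφ.measurable_innov o y).aemeasurable) (fun z => (hφ.measurable z).aemeasurable)
    fun _ z => by
      have hz := hW z z.2
      have hdd : (d : ℝ) ≠ 0 := by positivity
      have : innov d G φ o y = φ y - fun ω => (1 / d : ℝ) * φ (parent G o y) ω := rfl
      rw [this, covariance_sub_left (h2 _) ((h2 _).const_mul _) (h2 _), covariance_const_mul_left,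
        hφ.covariance_eq hd, hφ.covariance_eq hd, G.dist_comm (v := (z : V)),
        G.dist_comm (v := (z : V)), dist_eq_dist_parent_add_one hG hy hz.1 hz.2, pow_succ]
      ring
  rw [IndepFun_iff_Indep] at h
  refine indep_of_indep_of_le_left h (measurable_iff_comap_le.1 ?_)
  exact (measurable_pi_apply ()).comp (comap_measurable fun ω (_ : Unit) => innov d G φ o y ω)

/-- The Markov property at a single vertex. -/
lemma lintegral_mul_comp (hφ : IsFreeField d G P φ) (hd : 2 ≤ d) (hG : G.IsTree) {o y : V}
    (hy : y ≠ o) {W : Set V} (hW : ∀ z ∈ W, z ≠ y ∧ G.dist o z ≤ G.dist o y)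
    (hpar : parent G o y ∈ W) {Z : Ω → ℝ≥0∞} (hZ : Measurable[past φ W] Z) {f : ℝ → ℝ≥0∞}
    (hf : Measurable f) :
    ∫⁻ ω, Z ω * f (φ y ω) ∂P =
      ∫⁻ ω, Z ω * transOp (siteLaw d) (mehler d) f (φ (parent G o y) ω) ∂P := by
  have hP := hφ.isGaussianProcess.isProbabilityMeasure
  set U : Ω → ℝ≥0∞ × ℝ := fun ω => (Z ω, φ (parent G o y) ω) with hU
  have hUm : Measurable[past φ W] U := hZ.prodMk (measurable_past hpar)
  have hUm' : Measurable U := hUm.mono (hφ.past_le W) le_rfl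
  have hind : IndepFun U (innov d G φ o y) P := by
    rw [IndepFun_iff_Indep]
    exact indep_of_indep_of_le_left (hφ.indep_innov hd hG hy hW).symm
      (measurable_iff_comap_le.1 hUm)
  rw [indepFun_iff_map_prod_eq_prod_map_map hUm'.aemeasurable
    (hφ.measurable_innov o y).aemeasurable, hφ.map_innov hd hG hy] at hind
  have hg : Measurable fun p : (ℝ≥0∞ × ℝ) × ℝ => p.1.1 * f (p.1.2 / d + p.2) :=
    measurable_fst.fst.mul (hf.comp ((measurable_fst.snd.div_const _).add measurable_snd))
  calc ∫⁻ ω, Z ω * f (φ y ω) ∂P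
      = ∫⁻ ω, (fun p : (ℝ≥0∞ × ℝ) × ℝ => p.1.1 * f (p.1.2 / d + p.2))
          (U ω, innov d G φ o y ω) ∂P := by
        refine lintegral_congr fun ω => ?_
        simp only [hU, innov]
        congr 2
        ring
    _ = ∫⁻ p, p.1.1 * f (p.1.2 / d + p.2)
          ∂(P.map U).prod (gaussianReal 0 (Real.toNNReal (1 / d))) := by
        rw [← hind, lintegral_map hg (hUm'.prodMk (hφ.measurable_innov o y))]
    _ = ∫⁻ u, u.1 * transOp (siteLaw d) (mehler d) f u.2 ∂P.map U := by
        rw [lintegral_prod _ hg.aemeasurable]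
        refine lintegral_congr fun u => ?_
        have hfm : Measurable fun x => f (u.2 / d + x) := hf.comp (measurable_const_add _)
        refine (lintegral_const_mul u.1 hfm).trans ?_
        rw [lintegral_const_add_gaussian hd hf]
    _ = _ := by
        have hQ := measurable_transOp (isSymmDensity_mehler hd) hf
        have hg' : Measurable fun u : ℝ≥0∞ × ℝ => u.1 * transOp (siteLaw d) (mehler d) f u.2 :=
          measurable_fst.mul (hQ.comp measurable_snd)
        rw [lintegral_map hg' hUm']

/-- The vertices at distance at most `n` from `o`. -/
abbrev ballSet (G : SimpleGraph V) (o : V) (n : ℕ) : Set V := {z | G.dist o z ≤ n}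

/-- The Markov property for a set of vertices of the same generation. -/
lemma lintegral_mul_prod_comp (hφ : IsFreeField d G P φ) (hd : 2 ≤ d) (hG : G.IsTree) {o : V}
    {n : ℕ} (B : Finset V) (hB : ∀ y ∈ B, G.dist o y = n + 1) {f : ℝ → ℝ≥0∞} (hf : Measurable f)
    {Z : Ω → ℝ≥0∞} (hZ : Measurable[past φ (ballSet G o n)] Z) :
    ∫⁻ ω, Z ω * ∏ y ∈ B, f (φ y ω) ∂P =
      ∫⁻ ω, Z ω * ∏ y ∈ B, transOp (siteLaw d) (mehler d) f (φ (parent G o y) ω) ∂P := by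
  classical
  have hQ := measurable_transOp (isSymmDensity_mehler hd) hf
  induction B using Finset.induction_on generalizing Z with
  | empty => simp
  | insert y B hyB ih =>
    have hy := hB y (Finset.mem_insert_self _ _)
    have hB' : ∀ z ∈ B, G.dist o z = n + 1 := fun z hz => hB z (Finset.mem_insert_of_mem hz)
    have hyo : y ≠ o := by rintro rfl; simp at hy
    have hpar := dist_parent hG.connected hyo
    have hparn : parent G o y ∈ ballSet G o n := by
      change G.dist o _ ≤ n
      omega
    set W : Set V := ballSet G o n ∪ B with hW
    have hZW : Measurable[past φ W] fun ω => Z ω * ∏ z ∈ B, f (φ z ω) := by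
      refine (hZ.mono (past_mono Set.subset_union_left) le_rfl).mul ?_
      exact Finset.measurable_prod _ fun z hz =>
        hf.comp (measurable_past (Set.mem_union_right _ hz))
    have h1 := hφ.lintegral_mul_comp hd hG hyo (W := W) ?_ (Set.mem_union_left _ hparn) hZW hf
    · have hZ' : Measurable[past φ (ballSet G o n)] fun ω =>
          Z ω * transOp (siteLaw d) (mehler d) f (φ (parent G o y) ω) :=
        hZ.mul (hQ.comp (measurable_past hparn))
      have h2 := ih hB' hZ'
      calc ∫⁻ ω, Z ω * ∏ z ∈ insert y B, f (φ z ω) ∂P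
          = ∫⁻ ω, (Z ω * ∏ z ∈ B, f (φ z ω)) * f (φ y ω) ∂P := by
            refine lintegral_congr fun ω => ?_
            rw [Finset.prod_insert hyB]
            ring
        _ = ∫⁻ ω, (Z ω * transOp (siteLaw d) (mehler d) f (φ (parent G o y) ω)) *
              ∏ z ∈ B, f (φ z ω) ∂P := by
            rw [h1]
            refine lintegral_congr fun ω => ?_
            ring
        _ = _ := by
            rw [h2]
            refine lintegral_congr fun ω => ?_
            rw [Finset.prod_insert hyB]
            ring
    · rintro z (hz | hz)
      · have hz' : G.dist o z ≤ n := hz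
        exact ⟨by rintro rfl; omega, by omega⟩
      · exact ⟨by rintro rfl; exact hyB hz, by rw [hB' z hz, hy]⟩

end IsFreeField

section

variable {V : Type*} {G : SimpleGraph V} [∀ v : V, Fintype (G.neighborSet v)]

lemma le_card_children (hG : G.IsTree) {d : ℕ} (hreg : G.IsRegularOfDegree (d + 1)) (o x : V) :
    d ≤ (children G o x).card := by
  by_cases hx : x = o
  · rw [hx, card_children_root hreg]
    omega
  · rw [card_children hG hreg hx]

lemma alive_subset {o : V} {h : ℝ} {n k : ℕ} {ψ : V → ℝ} :
    alive G o h n k ψ ⊆ sphere G o (n + k) := fun _ hy => (mem_alive.1 hy).1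

open Classical in
lemma alive_succ (hG : G.IsTree) {o : V} {h : ℝ} {n k : ℕ} {ψ : V → ℝ} :
    alive G o h n (k + 1) ψ =
      ((alive G o h n k ψ).biUnion (children G o)).filter fun y => h ≤ ψ y := by
  ext y
  rw [mem_alive_succ hG, Finset.mem_filter, Finset.mem_biUnion]
  refine and_congr_left fun _ => ⟨fun hy => ⟨_, hy.2, (mem_children hG).2 ⟨hy.1, rfl⟩⟩, ?_⟩
  rintro ⟨x, hx, hy⟩
  obtain ⟨h1, rfl⟩ := (mem_children hG).1 hy
  exact ⟨h1, hx⟩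

lemma measurableSet_mem_alive {Ω : Type*} {m : MeasurableSpace Ω} (hG : G.IsTree) {o : V} {h : ℝ}
    {n k : ℕ} {φ : V → Ω → ℝ} (hφ : ∀ z, G.dist o z ≤ n + k → Measurable (φ z)) (y : V) :
    MeasurableSet {ω | y ∈ alive G o h n k (φ · ω)} := by
  by_cases hy : y ∈ sphere G o (n + k)
  · have : {ω | y ∈ alive G o h n k (φ · ω)} =
        ⋂ i, ⋂ (_ : i ≤ k), {ω | h ≤ φ ((parent G o)^[i] y) ω} := by
      ext ω
      simp [mem_alive, hy]
    rw [this]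
    refine MeasurableSet.iInter fun i => MeasurableSet.iInter fun hi => ?_
    refine measurableSet_le measurable_const (hφ _ ?_)
    have h1 : (parent G o)^[i] y ∈ sphere G o (n + k - i) :=
      iterate_parent_mem_sphere hG (by rwa [Nat.sub_add_cancel (by omega)])
    rw [(mem_sphere hG).1 h1]
    omega
  · have : {ω | y ∈ alive G o h n k (φ · ω)} = ∅ := by
      ext ω
      simp [mem_alive, hy]
    rw [this]
    exact MeasurableSet.empty

lemma measurableSet_alive_eq {Ω : Type*} {m : MeasurableSpace Ω} (hG : G.IsTree) {o : V} {h : ℝ}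
    {n k : ℕ} {φ : V → Ω → ℝ} (hφ : ∀ z, G.dist o z ≤ n + k → Measurable (φ z)) (A : Finset V) :
    MeasurableSet {ω | alive G o h n k (φ · ω) = A} := by
  have := countable_of_isTree hG
  have : {ω | alive G o h n k (φ · ω) = A} = ⋂ y, {ω | y ∈ alive G o h n k (φ · ω) ↔ y ∈ A} := by
    ext ω
    simp [Finset.ext_iff]
  rw [this]
  refine MeasurableSet.iInter fun y => ?_
  by_cases hy : y ∈ A
  · simpa [hy] using measurableSet_mem_alive hG hφ y
  · simp only [hy, iff_false]
    exact (measurableSet_mem_alive hG hφ y).compl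

lemma lintegral_alive {Ω : Type*} [MeasurableSpace Ω] {P : Measure Ω} (hG : G.IsTree) {o : V}
    {h : ℝ} {n k : ℕ} {φ : V → Ω → ℝ} (hφ : ∀ z, Measurable (φ z)) {F : Finset V → Ω → ℝ≥0∞}
    (hF : ∀ A, Measurable (F A)) :
    ∫⁻ ω, F (alive G o h n k (φ · ω)) ω ∂P = ∑ A ∈ (sphere G o (n + k)).powerset,
      ∫⁻ ω, {ω | alive G o h n k (φ · ω) = A}.indicator 1 ω * F A ω ∂P := by
  have hm : ∀ A, Measurable ({ω | alive G o h n k (φ · ω) = A}.indicator (1 : Ω → ℝ≥0∞)) :=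
    fun A => measurable_one.indicator (measurableSet_alive_eq hG (fun z _ => hφ z) A)
  refine Eq.trans (lintegral_congr fun ω => ?_)
    (lintegral_finsetSum _ fun A _ => (hm A).mul (hF A))
  rw [Finset.sum_eq_single (alive G o h n k (φ · ω))]
  · simp
  · intro A _ hA
    rw [Set.indicator_of_notMem (by simpa using hA.symm), zero_mul]
  · exact fun hA => absurd (Finset.mem_powerset.2 alive_subset) hA

end

namespace IsFreeField

variable {d : ℕ} {V Ω : Type*} {G : SimpleGraph V} [∀ v : V, Fintype (G.neighborSet v)]
  [MeasurableSpace Ω] {P : Measure Ω} {φ : V → Ω → ℝ}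

open Classical in
lemma lintegral_mul_prod_biUnion (hφ : IsFreeField d G P φ) (hd : 2 ≤ d) (hG : G.IsTree) {o : V}
    {n : ℕ} {A : Finset V} (hA : A ⊆ sphere G o n) {f : ℝ → ℝ≥0∞} (hf : Measurable f)
    {Z : Ω → ℝ≥0∞} (hZ : Measurable[past φ (ballSet G o n)] Z) :
    ∫⁻ ω, Z ω * ∏ y ∈ A.biUnion (children G o), f (φ y ω) ∂P =
      ∫⁻ ω, Z ω * ∏ x ∈ A,
        transOp (siteLaw d) (mehler d) f (φ x ω) ^ (children G o x).card ∂P := by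
  rw [hφ.lintegral_mul_prod_comp hd hG _ _ hf hZ]
  · refine lintegral_congr fun ω => ?_
    rw [Finset.prod_biUnion (pairwiseDisjoint_children hG o _)]
    congr 1
    refine Finset.prod_congr rfl fun x _ => ?_
    rw [← Finset.prod_const]
    exact Finset.prod_congr rfl fun y hy => by rw [((mem_children hG).1 hy).2]
  · intro y hy
    rw [← mem_sphere hG]
    exact Finset.biUnion_subset_biUnion_of_subset_left _ hA hy

lemma lintegral_prod_sphere_le (hφ : IsFreeField d G P φ) (hd : 2 ≤ d) (hG : G.IsTree)
    (hreg : G.IsRegularOfDegree (d + 1)) (o : V) (n : ℕ) {f : ℝ → ℝ≥0∞} (hf : Measurable f)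
    (hf1 : ∀ a, f a ≤ 1) :
    ∫⁻ ω, ∏ x ∈ sphere G o n, f (φ x ω) ∂P ≤
      ∫⁻ a, (fun f a => transOp (siteLaw d) (mehler d) f a ^ d)^[n] f a ∂siteLaw d := by
  have hK := isSymmDensity_mehler hd
  induction n generalizing f with
  | zero => simp [sphere, hφ.lintegral_comp o hf]
  | succ n ih =>
    have hQ1 := transOp_le_one hK hf1
    have h1 := hφ.lintegral_mul_prod_biUnion hd hG (A := sphere G o n) subset_rfl hf
      (Z := fun _ => 1) measurable_const
    simp only [one_mul] at h1
    rw [sphere, h1, Function.iterate_succ_apply]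
    refine le_trans (lintegral_mono fun ω => ?_)
      (ih ((measurable_transOp hK hf).pow_const d) fun a => pow_le_one₀ (zero_le) (hQ1 a))
    exact Finset.prod_le_prod' fun x _ =>
      pow_le_pow_of_le_one (zero_le) (hQ1 _) (le_card_children hG hreg o x)

lemma lintegral_prod_alive_succ_le (hφ : IsFreeField d G P φ) (hd : 2 ≤ d) (hG : G.IsTree)
    (hreg : G.IsRegularOfDegree (d + 1)) (o : V) (n k : ℕ) {h : ℝ} {s : ℝ → ℝ≥0∞}
    (hs : Measurable s) (hs1 : ∀ a, s a ≤ 1) (hsh : ∀ a < h, s a = 1)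
    (hsup : ∀ a, transOp (siteLaw d) (mehler d) s a ^ d ≤ s a) :
    ∫⁻ ω, ∏ x ∈ alive G o h n (k + 1) (φ · ω), s (φ x ω) ∂P ≤
      ∫⁻ ω, ∏ x ∈ alive G o h n k (φ · ω), s (φ x ω) ∂P := by
  classical
  have hK := isSymmDensity_mehler hd
  have hsm : ∀ x, Measurable fun ω => s (φ x ω) := fun x => hs.comp (hφ.measurable x)
  have h1 : ∀ ω, ∏ x ∈ alive G o h n (k + 1) (φ · ω), s (φ x ω) =
      ∏ x ∈ (alive G o h n k (φ · ω)).biUnion (children G o), s (φ x ω) := fun ω => by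
    rw [alive_succ hG]
    refine Finset.prod_subset (Finset.filter_subset _ _) fun x hx hx' => hsh _ ?_
    by_contra! hle
    exact hx' (Finset.mem_filter.2 ⟨hx, hle⟩)
  simp only [h1]
  rw [lintegral_alive hG hφ.measurable
      (F := fun A ω => ∏ x ∈ A.biUnion (children G o), s (φ x ω))
      fun A => Finset.measurable_prod _ fun x _ => hsm x,
    lintegral_alive hG hφ.measurable (F := fun A ω => ∏ x ∈ A, s (φ x ω))
      fun A => Finset.measurable_prod _ fun x _ => hsm x]
  refine Finset.sum_le_sum fun A hA => ?_
  have hZ : Measurable[past φ (ballSet G o (n + k))]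
      ({ω | alive G o h n k (φ · ω) = A}.indicator (1 : Ω → ℝ≥0∞)) :=
    Measurable.indicator (measurable_const (a := (1 : ℝ≥0∞)))
      (measurableSet_alive_eq hG (fun z hz => measurable_past hz) A)
  rw [hφ.lintegral_mul_prod_biUnion hd hG (Finset.mem_powerset.1 hA) hs hZ]
  refine lintegral_mono fun ω => ?_
  gcongr with x hx
  exact (pow_le_pow_of_le_one (zero_le) (transOp_le_one hK hs1 _)
    (le_card_children hG hreg o x)).trans (hsup _)

lemma measure_iUnion_alive_eq_empty_le (hφ : IsFreeField d G P φ) (hd : 2 ≤ d) (hG : G.IsTree)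
    (hreg : G.IsRegularOfDegree (d + 1)) (o : V) (n : ℕ) {h : ℝ} {s : ℝ → ℝ≥0∞}
    (hs : Measurable s) (hs1 : ∀ a, s a ≤ 1) (hsh : ∀ a < h, s a = 1)
    (hsup : ∀ a, transOp (siteLaw d) (mehler d) s a ^ d ≤ s a) :
    P (⋃ k, {ω | alive G o h n k (φ · ω) = ∅}) ≤
      ∫⁻ a, (fun f a => transOp (siteLaw d) (mehler d) f a ^ d)^[n] s a ∂siteLaw d := by
  have hmono : Monotone fun k => {ω | alive G o h n k (φ · ω) = ∅} := by
    refine monotone_nat_of_le_succ fun k ω (hω : alive G o h n k (φ · ω) = ∅) => ?_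
    change alive G o h n (k + 1) (φ · ω) = ∅
    rw [Finset.eq_empty_iff_forall_notMem] at hω ⊢
    exact fun y hy => hω _ ((mem_alive_succ hG).1 hy).1.2
  rw [hmono.measure_iUnion]
  refine iSup_le fun k => ?_
  have h0 : ∫⁻ ω, ∏ x ∈ alive G o h n 0 (φ · ω), s (φ x ω) ∂P ≤
      ∫⁻ a, (fun f a => transOp (siteLaw d) (mehler d) f a ^ d)^[n] s a ∂siteLaw d := by
    refine le_trans (le_of_eq (lintegral_congr fun ω => ?_))
      (hφ.lintegral_prod_sphere_le hd hG hreg o n hs hs1)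
    refine Finset.prod_subset alive_subset fun x hx hx' => hsh _ ?_
    by_contra! hle
    exact hx' (mem_alive_zero.2 ⟨hx, hle⟩)
  have hk : ∫⁻ ω, ∏ x ∈ alive G o h n k (φ · ω), s (φ x ω) ∂P ≤
      ∫⁻ a, (fun f a => transOp (siteLaw d) (mehler d) f a ^ d)^[n] s a ∂siteLaw d := by
    induction k with
    | zero => exact h0
    | succ k ih =>
      exact (hφ.lintegral_prod_alive_succ_le hd hG hreg o n k hs hs1 hsh hsup).trans ih
  refine le_trans ?_ hk
  rw [← lintegral_indicator_one (measurableSet_alive_eq hG (fun z _ => hφ.measurable z) ∅)]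
  refine lintegral_mono fun ω => ?_
  by_cases hω : alive G o h n k (φ · ω) = ∅
  · simp [hω]
  · simp [hω]

/-- Percolation from a supersolution of the extinction equation. -/
lemma ae_exists_infinite (hφ : IsFreeField d G P φ) (hd : 2 ≤ d) (hG : G.IsTree)
    (hreg : G.IsRegularOfDegree (d + 1)) {h : ℝ} {s : ℝ → ℝ≥0∞}
    (hs : Measurable s) (hs1 : ∀ a, s a ≤ 1) (hsh : ∀ a < h, s a = 1)
    (hsup : ∀ a, transOp (siteLaw d) (mehler d) s a ^ d ≤ s a)
    (hlim : Filter.Tendsto (fun n => ∫⁻ a,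
      (fun f a => transOp (siteLaw d) (mehler d) f a ^ d)^[n] s a ∂siteLaw d)
      Filter.atTop (nhds 0)) :
    ∀ᵐ ω ∂P, ∃ S : Set V, S.Infinite ∧ (∀ x ∈ S, h ≤ φ x ω) ∧ (G.induce S).Connected := by
  obtain ⟨o⟩ := hG.connected.nonempty
  rw [ae_iff]
  refine le_antisymm (ge_of_tendsto' hlim fun n => ?_) (zero_le)
  refine le_trans (measure_mono fun ω hω => ?_)
    (hφ.measure_iUnion_alive_eq_empty_le hd hG hreg o n hs hs1 hsh hsup)
  by_contra hne
  refine hω (exists_infinite_connected hG (o := o) (n := n) fun k => ?_)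
  rw [Finset.nonempty_iff_ne_empty]
  exact fun hk => hne (Set.mem_iUnion.2 ⟨k, hk⟩)

/-- The first-moment recursion for the surviving vertices. -/
lemma lintegral_sum_alive_succ (hφ : IsFreeField d G P φ) (hd : 2 ≤ d) (hG : G.IsTree) (o : V)
    (k : ℕ) {h : ℝ} {f : ℝ → ℝ≥0∞} (hf : Measurable f) :
    ∫⁻ ω, ∑ y ∈ alive G o h 0 (k + 1) (φ · ω), f (φ y ω) ∂P =
      ∫⁻ ω, ∑ x ∈ alive G o h 0 k (φ · ω), (children G o x).card *
        transOp (siteLaw d) (mehler d) ((Set.Ici h).indicator f) (φ x ω) ∂P := by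
  classical
  have hK := isSymmDensity_mehler hd
  have hf' : Measurable ((Set.Ici h).indicator f) := hf.indicator measurableSet_Ici
  have hfm : ∀ x, Measurable fun ω => (Set.Ici h).indicator f (φ x ω) := fun x =>
    hf'.comp (hφ.measurable x)
  have hQm : ∀ x, Measurable fun ω =>
      transOp (siteLaw d) (mehler d) ((Set.Ici h).indicator f) (φ x ω) := fun x =>
    (measurable_transOp hK hf').comp (hφ.measurable x)
  have h1 : ∀ ω, ∑ y ∈ alive G o h 0 (k + 1) (φ · ω), f (φ y ω) =
      ∑ y ∈ (alive G o h 0 k (φ · ω)).biUnion (children G o),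
        (Set.Ici h).indicator f (φ y ω) := fun ω => by
    rw [alive_succ hG, Finset.sum_filter]
    exact Finset.sum_congr rfl fun y _ => by simp [Set.indicator_apply]
  simp only [h1]
  rw [lintegral_alive hG hφ.measurable
      (F := fun A ω => ∑ y ∈ A.biUnion (children G o), (Set.Ici h).indicator f (φ y ω))
      fun A => Finset.measurable_sum _ fun x _ => hfm x,
    lintegral_alive hG hφ.measurable (F := fun A ω => ∑ x ∈ A, (children G o x).card *
        transOp (siteLaw d) (mehler d) ((Set.Ici h).indicator f) (φ x ω))
      fun A => Finset.measurable_sum _ fun x _ => (hQm x).const_mul _]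
  refine Finset.sum_congr rfl fun A hA => ?_
  have hA' := Finset.mem_powerset.1 hA
  set Z : Ω → ℝ≥0∞ := {ω | alive G o h 0 k (φ · ω) = A}.indicator 1 with hZdef
  have hZ : Measurable[past φ (ballSet G o (0 + k))] Z :=
    Measurable.indicator (measurable_const (a := (1 : ℝ≥0∞)))
      (measurableSet_alive_eq hG (fun z hz => measurable_past hz) A)
  have hZm : Measurable Z := hZ.mono (hφ.past_le _) le_rfl
  have hstep : ∀ x ∈ A, ∀ y ∈ children G o x,
      ∫⁻ ω, Z ω * (Set.Ici h).indicator f (φ y ω) ∂P =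
        ∫⁻ ω, Z ω * transOp (siteLaw d) (mehler d) ((Set.Ici h).indicator f) (φ x ω) ∂P := by
    intro x hx y hy
    have hxn := (mem_sphere hG).1 (hA' hx)
    obtain ⟨hyo, rfl⟩ := (mem_children hG).1 hy
    have hlev := dist_parent hG.connected hyo
    refine hφ.lintegral_mul_comp hd hG hyo (W := ballSet G o (0 + k)) (fun z hz => ?_) hxn.le hZ hf'
    have hz' : G.dist o z ≤ 0 + k := hz
    exact ⟨by rintro rfl; omega, by omega⟩
  have hZf : ∀ y, Measurable fun ω => Z ω * (Set.Ici h).indicator f (φ y ω) := fun y =>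
    hZm.mul (hfm y)
  have hZQ : ∀ x, Measurable fun ω =>
      Z ω * transOp (siteLaw d) (mehler d) ((Set.Ici h).indicator f) (φ x ω) := fun x =>
    hZm.mul (hQm x)
  simp only [Finset.mul_sum, mul_left_comm (Z _)]
  rw [lintegral_finsetSum _ fun y _ => hZf y,
    lintegral_finsetSum _ fun x _ => (hZQ x).const_mul _,
    Finset.sum_biUnion (pairwiseDisjoint_children hG o _)]
  refine Finset.sum_congr rfl fun x hx => ?_
  rw [Finset.sum_congr rfl (hstep x hx), Finset.sum_const, nsmul_eq_mul,
    ← lintegral_const_mul _ (hZQ x)]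

lemma lintegral_sum_alive_le (hφ : IsFreeField d G P φ) (hd : 2 ≤ d) (hG : G.IsTree)
    (hreg : G.IsRegularOfDegree (d + 1)) (o : V) (k : ℕ) {h : ℝ} {f : ℝ → ℝ≥0∞}
    (hf : Measurable f) :
    ∫⁻ ω, ∑ y ∈ alive G o h 0 k (φ · ω), f (φ y ω) ∂P ≤
      2 * ∫⁻ a, (cutOp (siteLaw d) (mehler d) d (Set.Ici h))^[k] ((Set.Ici h).indicator f) a
        ∂siteLaw d := by
  have hK := isSymmDensity_mehler hd
  have hzero : ∀ g : ℝ → ℝ≥0∞, Measurable g →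
      ∫⁻ ω, ∑ y ∈ alive G o h 0 0 (φ · ω), g (φ y ω) ∂P =
        ∫⁻ a, (Set.Ici h).indicator g a ∂siteLaw d := fun g hg => by
    rw [← hφ.lintegral_comp o (hg.indicator measurableSet_Ici)]
    refine lintegral_congr fun ω => ?_
    by_cases ho : h ≤ φ o ω
    · have : alive G o h 0 0 (φ · ω) = {o} := by
        ext y
        rw [mem_alive_zero, sphere, Finset.mem_singleton, and_iff_left_iff_imp]
        exact fun hy => hy ▸ ho
      simp [this, ho]
    · have : alive G o h 0 0 (φ · ω) = ∅ := by
        ext y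
        rw [mem_alive_zero, sphere, Finset.mem_singleton]
        simp only [Finset.notMem_empty, iff_false, not_and]
        exact fun hy => hy ▸ ho
      simp [this, ho]
  have hcut : ∀ g : ℝ → ℝ≥0∞, ∀ a, h ≤ a →
      d * transOp (siteLaw d) (mehler d) ((Set.Ici h).indicator g) a =
        cutOp (siteLaw d) (mehler d) d (Set.Ici h) ((Set.Ici h).indicator g) a :=
    fun g a ha => by
      rw [cutOp, Set.indicator_of_mem (Set.mem_Ici.2 ha), Set.indicator_indicator, Set.inter_self]
  have hind : ∀ g : ℝ → ℝ≥0∞,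
      (Set.Ici h).indicator (cutOp (siteLaw d) (mehler d) d (Set.Ici h) g) =
        cutOp (siteLaw d) (mehler d) d (Set.Ici h) g := fun g => by
    rw [cutOp, Set.indicator_indicator, Set.inter_self]
  have hcm : ∀ g : ℝ → ℝ≥0∞, Measurable g → Measurable
      (cutOp (siteLaw d) (mehler d) d (Set.Ici h) ((Set.Ici h).indicator g)) := fun g hg =>
    measurable_cutOp hK _ measurableSet_Ici (hg.indicator measurableSet_Ici)
  match k with
  | 0 =>
    rw [hzero f hf]
    exact le_mul_of_one_le_left (zero_le) one_le_two
  | k + 1 =>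
    induction k generalizing f with
    | zero =>
      rw [hφ.lintegral_sum_alive_succ hd hG o 0 hf, Function.iterate_succ_apply,
        Function.iterate_zero_apply, ← hind, ← hzero _ (hcm f hf), ← lintegral_const_mul' _ _ (by simp)]
      refine lintegral_mono fun ω => ?_
      rw [Finset.mul_sum]
      refine Finset.sum_le_sum fun x hx => ?_
      rw [← hcut f _ (le_of_mem_alive hx), ← mul_assoc]
      gcongr
      obtain rfl : x = o := by simpa [sphere] using (mem_alive_zero.1 hx).1
      rw [card_children_root hreg]
      exact_mod_cast (by omega : d + 1 ≤ 2 * d)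
    | succ k ih =>
      rw [hφ.lintegral_sum_alive_succ hd hG o _ hf, Function.iterate_succ_apply, ← hind]
      refine le_trans (lintegral_mono fun ω => Finset.sum_le_sum fun x hx => ?_) (ih (hcm f hf))
      have hxo : x ≠ o := by
        rintro rfl
        simpa using (mem_sphere hG).1 (alive_subset hx)
      rw [card_children hG hreg hxo, hcut f _ (le_of_mem_alive hx)]

/-- Absence of percolation when the first moment of the surviving vertices vanishes. -/
lemma ae_forall_finite (hφ : IsFreeField d G P φ) (hd : 2 ≤ d) (hG : G.IsTree)
    (hreg : G.IsRegularOfDegree (d + 1)) {h : ℝ}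
    (hlim : Filter.Tendsto (fun n => ∫⁻ a,
      (cutOp (siteLaw d) (mehler d) d (Set.Ici h))^[n] ((Set.Ici h).indicator 1) a ∂siteLaw d)
      Filter.atTop (nhds 0)) :
    ∀ᵐ ω ∂P, ∀ S : Set V, ((∀ x ∈ S, h ≤ φ x ω) ∧ (G.induce S).Connected) → S.Finite := by
  have := countable_of_isTree hG
  have key : ∀ᵐ ω ∂P, ∀ o, ¬ ∀ k, (alive G o h 0 k (φ · ω)).Nonempty := by
    rw [ae_all_iff]
    intro o
    rw [ae_iff]
    have hlim2 := ENNReal.Tendsto.const_mul hlim (Or.inr (ENNReal.ofNat_ne_top (n := 2)))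
    rw [mul_zero] at hlim2
    refine le_antisymm (ge_of_tendsto' hlim2 fun k => ?_) (zero_le)
    refine le_trans (measure_mono (t := {ω | alive G o h 0 k (φ · ω) = ∅}ᶜ) fun ω hω => ?_)
      (le_trans ?_ (hφ.lintegral_sum_alive_le hd hG hreg o k measurable_one))
    · exact (not_not.1 hω k).ne_empty
    · rw [← lintegral_indicator_one
        (measurableSet_alive_eq hG (fun z _ => hφ.measurable z) ∅).compl]
      refine lintegral_mono fun ω => ?_
      by_cases hω : alive G o h 0 k (φ · ω) = ∅
      · simp [hω]
      · have := Finset.card_pos.2 (Finset.nonempty_iff_ne_empty.2 hω)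
        simp only [Set.indicator_of_mem (show ω ∈ {ω | alive G o h 0 k (φ · ω) = ∅}ᶜ from hω),
          Pi.one_apply, Finset.sum_const, nsmul_eq_mul, mul_one]
        exact_mod_cast this
  filter_upwards [key] with ω hω S ⟨hS, hconn⟩
  by_contra hinf
  obtain ⟨⟨o, ho⟩⟩ := hconn.nonempty
  exact hω o fun k => alive_nonempty_of_infinite hG hconn hinf hS ho k

end IsFreeField

end TreeGFF

/-- Let φ be the Gaussian free field on the (d+1)-regular tree T
(centered Gaussian with covariance (d/(d²-1))·d^{-dist(x,y)}), d ≥ 2, and let h_*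
be the unique real with λ_{h_*} = 1, where λ_h = ‖π_h(dQ_{log d})π_h‖ on
L²(N(0, d/(d²-1))). Then for h < h_*, a.s. the level set {φ ≥ h} has an infinite
connected component, while for h > h_*, a.s. all its components are finite. -/
theorem stmt_15 (d : ℕ) (hd : 2 ≤ d)
    {V : Type*} (G : SimpleGraph V) [∀ v : V, Fintype (G.neighborSet v)]
    (htree : G.IsTree) (hreg : G.IsRegularOfDegree (d + 1))
    {Ω : Type*} [MeasurableSpace Ω] (P : Measure Ω) [IsProbabilityMeasure P]
    (φ : V → Ω → ℝ) (hφm : ∀ x, Measurable (φ x))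
    (hGauss : ∀ (s : Finset V) (c : V → ℝ),
      Measure.map (fun ω => ∑ x ∈ s, c x * φ x ω) P =
        gaussianReal 0 (Real.toNNReal (∑ x ∈ s, ∑ y ∈ s,
          c x * c y * (((d : ℝ) / ((d : ℝ) ^ 2 - 1)) * (1 / (d : ℝ)) ^ (G.dist x y)))))
    (ν : Measure ℝ) (hν : ν = gaussianReal 0 (Real.toNNReal ((d : ℝ) / ((d : ℝ) ^ 2 - 1))))
    (Q : Lp ℝ 2 ν →L[ℝ] Lp ℝ 2 ν)
    (hQ : ∀ f : Lp ℝ 2 ν, (Q f : ℝ → ℝ) =ᵐ[ν]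
      fun a => ∫ y, (f : ℝ → ℝ) (a / d + Real.sqrt (1 - 1 / (d : ℝ) ^ 2) * y) ∂ν)
    (Ph : ℝ → (Lp ℝ 2 ν →L[ℝ] Lp ℝ 2 ν))
    (hPh : ∀ (h : ℝ) (f : Lp ℝ 2 ν), (Ph h f : ℝ → ℝ) =ᵐ[ν]
      fun a => if h ≤ a then (f : ℝ → ℝ) a else 0)
    (lam : ℝ → ℝ) (hlam : ∀ h : ℝ, lam h = ‖Ph h ∘L ((d : ℝ) • Q) ∘L Ph h‖)
    (hstar : ℝ) (hstar_eq : lam hstar = 1) :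
    (∀ h : ℝ, h < hstar → ∀ᵐ ω ∂P,
      ∃ S : Set V, S.Infinite ∧ (∀ x ∈ S, h ≤ φ x ω) ∧ (G.induce S).Connected) ∧
    (∀ h : ℝ, hstar < h → ∀ᵐ ω ∂P,
      ∀ S : Set V, ((∀ x ∈ S, h ≤ φ x ω) ∧ (G.induce S).Connected) → S.Finite) := by
  obtain rfl : ν = TreeGFF.siteLaw d := hν
  have hφ : TreeGFF.IsFreeField d G P φ := ⟨hφm, hGauss⟩
  refine ⟨fun h hh => ?_, fun h hh => ?_⟩
  · rw [hlam] at hstar_eq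
    have hlt := TreeGFF.norm_cutOperator_lt hd hQ hPh hh (by rw [hstar_eq]; exact one_pos)
    rw [hstar_eq] at hlt
    obtain ⟨s, hs, hs1, hsh, hsup, hlim⟩ :=
      TreeGFF.exists_supersolution_of_one_lt_norm hd hQ hPh hlt
    exact hφ.ae_exists_infinite hd htree hreg hs hs1 hsh hsup hlim
  · rw [hlam] at hstar_eq
    have hlt : ‖Ph h ∘L ((d : ℝ) • Q) ∘L Ph h‖ < 1 := by
      rcases (norm_nonneg (Ph h ∘L ((d : ℝ) • Q) ∘L Ph h)).eq_or_lt with h0 | h0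
      · rw [← h0]
        exact one_pos
      · exact (TreeGFF.norm_cutOperator_lt hd hQ hPh hh h0).trans_eq hstar_eq
    exact hφ.ae_forall_finite hd htree hreg
      (TreeGFF.tendsto_lintegral_iterate_cutOp hd hQ hPh hlt)
end

section
/- For all h ≥ 0 and d ≥ 2, λ_h ≤ λ_0 · exp(−h²(d−1)²/(2d)) < d · exp(−h²(d−1)²/(2d)), where λ_h = ‖π_h(dQ_{log d})π_h‖ on L²(N(0, d/(d²−1))). -/
open MeasureTheory ProbabilityTheory

/-- The square root of the Lebesgue density of the centred Gaussian of variance `D / (D² - 1)`. -/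
noncomputable def sqrtDensity (D a : ℝ) : ℝ :=
  √(gaussianPDFReal 0 (Real.toNNReal (D / (D ^ 2 - 1))) a)

/-- The Mehler kernel of correlation `1 / D`, symmetrized with respect to Lebesgue measure. -/
noncomputable def symmKernel (D a y : ℝ) : ℝ :=
  √(D / (2 * Real.pi)) * Real.exp (-((D + 1 / D) / 4) * (a ^ 2 + y ^ 2) + a * y)

lemma variance_pos {D : ℝ} (hD : 1 < D) : 0 < D / (D ^ 2 - 1) :=
  div_pos (by linarith) (by nlinarith)

lemma toNNReal_variance_ne_zero {D : ℝ} (hD : 1 < D) : Real.toNNReal (D / (D ^ 2 - 1)) ≠ 0 :=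
  (Real.toNNReal_pos.2 (variance_pos hD)).ne'

lemma sqrtDensity_pos {D : ℝ} (hD : 1 < D) (a : ℝ) : 0 < sqrtDensity D a :=
  Real.sqrt_pos.2 (gaussianPDFReal_pos _ _ _ (toNNReal_variance_ne_zero hD))

lemma sq_sqrtDensity (D a : ℝ) :
    sqrtDensity D a ^ 2 = gaussianPDFReal 0 (Real.toNNReal (D / (D ^ 2 - 1))) a :=
  Real.sq_sqrt (gaussianPDFReal_nonneg _ _ _)

lemma measurable_sqrtDensity (D : ℝ) : Measurable (sqrtDensity D) :=
  (measurable_gaussianPDFReal _ _).sqrt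

lemma symmKernel_nonneg (D a y : ℝ) : 0 ≤ symmKernel D a y := by
  unfold symmKernel; positivity

lemma sqrtDensity_mul_gaussianPDFReal {D : ℝ} (hD : 1 < D) (a y : ℝ) :
    sqrtDensity D a * gaussianPDFReal (a / D) (Real.toNNReal (1 / D)) y =
      symmKernel D a y * sqrtDensity D y := by
  have hD0 : 0 < D := by linarith
  have hv := variance_pos hD
  have hD2 : D ^ 2 - 1 ≠ 0 := by nlinarith
  have key : ∀ x, sqrtDensity D x = √((√(2 * Real.pi * (D / (D ^ 2 - 1))))⁻¹) *
      Real.exp (-x ^ 2 * (D ^ 2 - 1) / (4 * D)) := by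
    intro x
    rw [sqrtDensity, gaussianPDFReal_def]
    simp only
    rw [Real.sqrt_mul (by positivity), ← Real.exp_half, Real.coe_toNNReal _ hv.le]
    congr 2
    field_simp
    ring
  have hc : (√(2 * Real.pi * (1 / D)))⁻¹ = √(D / (2 * Real.pi)) := by
    rw [← Real.sqrt_inv]; congr 1; field_simp
  rw [key, key, gaussianPDFReal_def, symmKernel]
  simp only
  rw [Real.coe_toNNReal _ (by positivity : (0 : ℝ) ≤ 1 / D), hc,
    mul_mul_mul_comm (√(√_)⁻¹), mul_mul_mul_comm (√(D / _)), ← Real.exp_add, ← Real.exp_add,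
    mul_comm (√(√_)⁻¹)]
  congr 2
  field_simp
  ring

lemma sq_symmKernel {D : ℝ} (hD : 1 < D) (a y : ℝ) :
    symmKernel D a y ^ 2 = D / (2 * Real.pi) *
      Real.exp (-((D ^ 2 - 1) ^ 2 / (2 * D * (D ^ 2 + 1))) * a ^ 2) *
      Real.exp (-((D ^ 2 + 1) / (2 * D)) * (y + -(2 * D / (D ^ 2 + 1) * a)) ^ 2) := by
  have hD0 : 0 < D := by linarith
  rw [symmKernel, mul_pow, Real.sq_sqrt (by positivity), ← Real.exp_nat_mul, mul_assoc,
    ← Real.exp_add]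
  congr 2
  push_cast
  field_simp
  ring

lemma integrable_sq_symmKernel {D : ℝ} (hD : 1 < D) (a : ℝ) :
    Integrable (fun y => symmKernel D a y ^ 2) := by
  have hD0 : 0 < D := by linarith
  simp_rw [sq_symmKernel hD]
  exact ((integrable_exp_neg_mul_sq (by positivity)).comp_add_right _).const_mul _

lemma memLp_symmKernel {D : ℝ} (hD : 1 < D) (a : ℝ) : MemLp (symmKernel D a) 2 := by
  rw [memLp_two_iff_integrable_sq]
  · exact integrable_sq_symmKernel hD a
  · exact Continuous.aestronglyMeasurable (by unfold symmKernel; fun_prop)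

lemma integral_sq_symmKernel {D : ℝ} (hD : 1 < D) (a : ℝ) :
    ∫ y, symmKernel D a y ^ 2 = D / (2 * Real.pi) * √(Real.pi / ((D ^ 2 + 1) / (2 * D))) *
      Real.exp (-((D ^ 2 - 1) ^ 2 / (2 * D * (D ^ 2 + 1))) * a ^ 2) := by
  simp_rw [sq_symmKernel hD]
  rw [integral_const_mul, integral_add_right_eq_self
    (fun y => Real.exp (-((D ^ 2 + 1) / (2 * D)) * y ^ 2)), integral_gaussian]
  ring

/-- The Hilbert–Schmidt norm of the Mehler operator restricted to a half line. -/
lemma integral_Ioi_integral_sq_symmKernel {D : ℝ} (hD : 1 < D) :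
    ∫ a in Set.Ioi 0, ∫ y, symmKernel D a y ^ 2 = D ^ 2 / (2 * (D ^ 2 - 1)) := by
  have hD0 : 0 < D := by linarith
  have hD2 : 0 < D ^ 2 - 1 := by nlinarith
  simp_rw [integral_sq_symmKernel hD]
  rw [integral_const_mul, integral_gaussian_Ioi, mul_assoc, mul_div_assoc',
    ← Real.sqrt_mul (by positivity)]
  rw [show Real.pi / ((D ^ 2 + 1) / (2 * D)) *
    (Real.pi / ((D ^ 2 - 1) ^ 2 / (2 * D * (D ^ 2 + 1)))) =
    (2 * D * Real.pi / (D ^ 2 - 1)) ^ 2 by field_simp, Real.sqrt_sq (by positivity)]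
  field_simp

lemma symmKernel_add_le {D h s t : ℝ} (hD : 1 < D) (hh : 0 ≤ h) (hs : 0 ≤ s) (ht : 0 ≤ t) :
    symmKernel D (s + h) (t + h) ≤
      Real.exp (-(h ^ 2 * (D - 1) ^ 2) / (2 * D)) * symmKernel D s t := by
  have hD0 : 0 < D := by linarith
  rw [symmKernel, symmKernel, mul_left_comm, ← Real.exp_add]
  refine mul_le_mul_of_nonneg_left (Real.exp_le_exp.2 ?_) (Real.sqrt_nonneg _)
  have : -(h ^ 2 * (D - 1) ^ 2) / (2 * D) + (-((D + 1 / D) / 4) * (s ^ 2 + t ^ 2) + s * t) -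
      (-((D + 1 / D) / 4) * ((s + h) ^ 2 + (t + h) ^ 2) + (s + h) * (t + h)) =
      (D - 1) ^ 2 / (2 * D) * (h * (s + t)) := by
    field_simp; ring
  have : 0 ≤ (D - 1) ^ 2 / (2 * D) * (h * (s + t)) := by positivity
  linarith

lemma norm_sq_eq_integral {D : ℝ} (hD : 1 < D)
    (f : Lp ℝ 2 (gaussianReal 0 (Real.toNNReal (D / (D ^ 2 - 1))))) :
    ‖f‖ ^ 2 = ∫ x, (sqrtDensity D x * f x) ^ 2 := by
  rw [← real_inner_self_eq_norm_sq, L2.inner_def,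
    integral_gaussianReal_eq_integral_smul (toNNReal_variance_ne_zero hD)]
  simp only [real_inner_self_eq_norm_sq, Real.norm_eq_abs, sq_abs, smul_eq_mul, mul_pow,
    sq_sqrtDensity]

lemma memLp_gaussianReal_iff {D : ℝ} (hD : 1 < D) {f : ℝ → ℝ} :
    MemLp f 2 (gaussianReal 0 (Real.toNNReal (D / (D ^ 2 - 1)))) ↔
      MemLp (fun x => sqrtDensity D x * f x) 2 := by
  have h0 := toNNReal_variance_ne_zero hD
  have hac := gaussianReal_absolutelyContinuous 0 h0
  have hac' := gaussianReal_absolutelyContinuous' 0 h0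
  have aux : AEStronglyMeasurable f volume →
      (MemLp f 2 (gaussianReal 0 (Real.toNNReal (D / (D ^ 2 - 1)))) ↔
      MemLp (fun x => sqrtDensity D x * f x) 2) := by
    intro hf
    rw [memLp_two_iff_integrable_sq (hf.mono_ac hac), memLp_two_iff_integrable_sq
      (f := fun x => sqrtDensity D x * f x)
      ((measurable_sqrtDensity D).aestronglyMeasurable.mul hf),
      gaussianReal_of_var_ne_zero _ h0, integrable_withDensity_iff_integrable_smul'
      (measurable_gaussianPDF _ _) (by simp [gaussianPDF])]
    simp only [toReal_gaussianPDF, smul_eq_mul, mul_pow, sq_sqrtDensity]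
  constructor
  · exact fun h => (aux (h.1.mono_ac hac')).1 h
  · intro h
    refine (aux ?_).2 h
    have := (measurable_sqrtDensity D).inv.aestronglyMeasurable.mul h.1
    refine this.congr (.of_forall fun x => ?_)
    simp [(sqrtDensity_pos hD x).ne']

lemma norm_sq_eq_integral_of_ae_eq {D : ℝ} (hD : 1 < D)
    {f : Lp ℝ 2 (gaussianReal 0 (Real.toNNReal (D / (D ^ 2 - 1))))} {u : ℝ → ℝ}
    (hu : (fun x => sqrtDensity D x * f x) =ᵐ[volume] u) :
    ‖f‖ ^ 2 = ∫ x, u x ^ 2 := by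
  rw [norm_sq_eq_integral hD]
  exact integral_congr_ae (hu.mono fun x hx => congrArg (· ^ 2) hx)

lemma integral_mehler {D : ℝ} (hD : 1 < D) {f : ℝ → ℝ} (hf : StronglyMeasurable f) (a : ℝ) :
    ∫ y, f (a / D + √(1 - 1 / D ^ 2) * y)
        ∂(gaussianReal 0 (Real.toNNReal (D / (D ^ 2 - 1)))) =
      ∫ y, gaussianPDFReal (a / D) (Real.toNNReal (1 / D)) y * f y := by
  have hD0 : 0 < D := by linarith
  have hD2 : 0 < D ^ 2 - 1 := by nlinarith
  have h1 : 0 ≤ 1 - 1 / D ^ 2 := by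
    rw [show 1 - 1 / D ^ 2 = (D ^ 2 - 1) / D ^ 2 by field_simp]
    positivity
  have hmap : Measure.map (fun y => a / D + √(1 - 1 / D ^ 2) * y)
      (gaussianReal 0 (Real.toNNReal (D / (D ^ 2 - 1)))) =
      gaussianReal (a / D) (Real.toNNReal (1 / D)) := by
    have : (fun y => a / D + √(1 - 1 / D ^ 2) * y) =
      (fun x => a / D + x) ∘ (fun y => √(1 - 1 / D ^ 2) * y) := rfl
    rw [this, ← Measure.map_map (by fun_prop) (by fun_prop), gaussianReal_map_const_mul,
      gaussianReal_map_const_add, mul_zero, zero_add]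
    congr 1
    ext
    rw [NNReal.coe_mul, NNReal.coe_mk, Real.sq_sqrt h1, Real.coe_toNNReal _ (variance_pos hD).le,
      Real.coe_toNNReal _ (by positivity)]
    field_simp
  have hne : Real.toNNReal (1 / D) ≠ 0 := (Real.toNNReal_pos.2 (by positivity)).ne'
  rw [← integral_map (φ := fun y => a / D + √(1 - 1 / D ^ 2) * y) (by fun_prop)
    hf.aestronglyMeasurable, hmap, integral_gaussianReal_eq_integral_smul hne]
  rfl

/-- The compression of `D • Q` to a half line, transported to Lebesgue measure, is the integral
operator with kernel `D * symmKernel D`. -/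
lemma sqrtDensity_mul_compression {D : ℝ} (hD : 1 < D) {ν : Measure ℝ}
    (hν : ν = gaussianReal 0 (Real.toNNReal (D / (D ^ 2 - 1))))
    {Q : Lp ℝ 2 ν →L[ℝ] Lp ℝ 2 ν}
    (hQ : ∀ f : Lp ℝ 2 ν, (Q f : ℝ → ℝ) =ᵐ[ν]
      fun a => ∫ y, (f : ℝ → ℝ) (a / D + √(1 - 1 / D ^ 2) * y) ∂ν)
    {h : ℝ} {P : Lp ℝ 2 ν →L[ℝ] Lp ℝ 2 ν}
    (hP : ∀ f : Lp ℝ 2 ν, (P f : ℝ → ℝ) =ᵐ[ν] fun a => if h ≤ a then (f : ℝ → ℝ) a else 0)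
    (f : Lp ℝ 2 ν) :
    (fun a => sqrtDensity D a * (P ∘L (D • Q) ∘L P) f a) =ᵐ[volume]
      (Set.Ici h).indicator fun a => D * ∫ y, symmKernel D a y *
        (Set.Ici h).indicator (fun y => sqrtDensity D y * f y) y := by
  subst hν
  have hac := gaussianReal_absolutelyContinuous' 0 (toNNReal_variance_ne_zero hD)
  have e1 := hac.ae_eq (hP ((D • Q) (P f)))
  have e2 := hac.ae_eq (Lp.coeFn_smul D (Q (P f)))
  have e3 := hac.ae_eq (hQ (P f))
  have e4 := hac.ae_eq (hP f)
  filter_upwards [e1, e2, e3] with a h1 h2 h3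
  have hint : (∫ y, gaussianPDFReal (a / D) (Real.toNNReal (1 / D)) y * P f y) =
      ∫ y, gaussianPDFReal (a / D) (Real.toNNReal (1 / D)) y * (if h ≤ y then f y else 0) :=
    integral_congr_ae (e4.mono fun y hy => by simp only [hy])
  rw [integral_mehler hD (Lp.stronglyMeasurable _), hint] at h3
  simp only [ContinuousLinearMap.comp_apply]
  rw [h1]
  simp only [_root_.smul_apply, Set.indicator_apply, Set.mem_Ici]
  split_ifs with ha
  · rw [h2, Pi.smul_apply, h3, smul_eq_mul, mul_left_comm, ← integral_const_mul]
    congr 2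
    ext y
    rw [← mul_assoc, sqrtDensity_mul_gaussianPDFReal hD]
    split_ifs <;> ring
  · simp

lemma sq_integral_mul_le {f g : ℝ → ℝ} (hf : MemLp f 2) (hg : MemLp g 2) :
    (∫ x, f x * g x) ^ 2 ≤ (∫ x, f x ^ 2) * ∫ x, g x ^ 2 := by
  have hnorm : ∀ {u : ℝ → ℝ} (hu : MemLp u 2), ‖hu.toLp u‖ ^ 2 = ∫ x, u x ^ 2 := by
    intro u hu
    rw [← real_inner_self_eq_norm_sq, L2.inner_def]
    refine integral_congr_ae (hu.coeFn_toLp.mono fun x hx => ?_)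
    simp only [hx, real_inner_self_eq_norm_sq, Real.norm_eq_abs, sq_abs]
  have hin : inner ℝ (hf.toLp f) (hg.toLp g) = ∫ x, f x * g x := by
    rw [L2.inner_def]
    refine integral_congr_ae ?_
    filter_upwards [hf.coeFn_toLp, hg.coeFn_toLp] with x hx hy
    simp only [hx, hy, RCLike.inner_apply, conj_trivial, mul_comm]
  rw [← hnorm hf, ← hnorm hg, ← hin, ← mul_pow, ← sq_abs]
  gcongr
  exact abs_real_inner_le_norm _ _

lemma integral_sq_indicator_le {u : ℝ → ℝ} (hu : MemLp u 2) {s : Set ℝ} :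
    ∫ x, s.indicator u x ^ 2 ≤ ∫ x, u x ^ 2 := by
  refine integral_mono_of_nonneg (.of_forall fun x => sq_nonneg _) hu.integrable_sq
    (.of_forall fun x => ?_)
  by_cases hx : x ∈ s
  · simp [hx]
  · simpa [hx] using sq_nonneg (u x)

lemma norm_compression_zero_lt {D : ℝ} (hD : 2 ≤ D) {ν : Measure ℝ}
    (hν : ν = gaussianReal 0 (Real.toNNReal (D / (D ^ 2 - 1))))
    {Q : Lp ℝ 2 ν →L[ℝ] Lp ℝ 2 ν}
    (hQ : ∀ f : Lp ℝ 2 ν, (Q f : ℝ → ℝ) =ᵐ[ν]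
      fun a => ∫ y, (f : ℝ → ℝ) (a / D + √(1 - 1 / D ^ 2) * y) ∂ν)
    {P : Lp ℝ 2 ν →L[ℝ] Lp ℝ 2 ν}
    (hP : ∀ f : Lp ℝ 2 ν, (P f : ℝ → ℝ) =ᵐ[ν] fun a => if 0 ≤ a then (f : ℝ → ℝ) a else 0) :
    ‖P ∘L (D • Q) ∘L P‖ < D := by
  have hD1 : 1 < D := by linarith
  have hD0 : 0 < D := by linarith
  have hbound : ‖P ∘L (D • Q) ∘L P‖ ≤ D * √(2 / 3) := by
    refine ContinuousLinearMap.opNorm_le_bound _ (by positivity) fun f => ?_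
    have hae := sqrtDensity_mul_compression hD1 hν hQ hP f
    subst hν
    have hf := (memLp_gaussianReal_iff hD1).1 (Lp.memLp f)
    set F := (Set.Ici (0 : ℝ)).indicator fun y => sqrtDensity D y * f y with hF
    have hFL : MemLp F 2 := hf.indicator measurableSet_Ici
    have hFn : ∫ x, F x ^ 2 ≤ ‖f‖ ^ 2 := by
      rw [norm_sq_eq_integral hD1]
      exact integral_sq_indicator_le hf
    have hD2 : 0 < D ^ 2 - 1 := by nlinarith
    have hk : IntegrableOn (fun a => ∫ y, symmKernel D a y ^ 2) (Set.Ici 0) := by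
      simp_rw [integral_sq_symmKernel hD1]
      exact ((integrable_exp_neg_mul_sq (by positivity)).const_mul
        _).integrableOn
    refine le_of_sq_le_sq ?_ (by positivity)
    rw [norm_sq_eq_integral_of_ae_eq hD1 hae]
    calc _ ≤ ∫ a, (Set.Ici (0 : ℝ)).indicator
            (fun a => ∫ y, symmKernel D a y ^ 2) a * (D ^ 2 * ‖f‖ ^ 2) := by
          refine integral_mono_of_nonneg (.of_forall fun x => sq_nonneg _)
            ((hk.integrable_indicator measurableSet_Ici).mul_const _) (.of_forall fun a => ?_)
          simp only [Set.indicator_apply]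
          split_ifs
          · rw [mul_pow, mul_left_comm]
            gcongr
            refine (sq_integral_mul_le (memLp_symmKernel hD1 a) hFL).trans ?_
            gcongr
          · simp
      _ = D ^ 2 / (2 * (D ^ 2 - 1)) * (D ^ 2 * ‖f‖ ^ 2) := by
          rw [integral_mul_const, integral_indicator measurableSet_Ici, integral_Ici_eq_integral_Ioi,
            integral_Ioi_integral_sq_symmKernel hD1]
      _ ≤ 2 / 3 * (D ^ 2 * ‖f‖ ^ 2) := by
          refine mul_le_mul_of_nonneg_right ?_ (by positivity)
          rw [div_le_div_iff₀ (by nlinarith) (by norm_num)]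
          nlinarith
      _ = _ := by
          rw [mul_pow, mul_pow, Real.sq_sqrt (by norm_num)]
          ring
  refine hbound.trans_lt ?_
  have : √(2 / 3) < 1 := by rw [Real.sqrt_lt' one_pos]; norm_num
  nlinarith

lemma norm_compression_le {D : ℝ} (hD : 1 < D) {ν : Measure ℝ}
    (hν : ν = gaussianReal 0 (Real.toNNReal (D / (D ^ 2 - 1))))
    {Q : Lp ℝ 2 ν →L[ℝ] Lp ℝ 2 ν}
    (hQ : ∀ f : Lp ℝ 2 ν, (Q f : ℝ → ℝ) =ᵐ[ν]
      fun a => ∫ y, (f : ℝ → ℝ) (a / D + √(1 - 1 / D ^ 2) * y) ∂ν)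
    {h : ℝ} (hh : 0 ≤ h) {P P₀ : Lp ℝ 2 ν →L[ℝ] Lp ℝ 2 ν}
    (hP : ∀ f : Lp ℝ 2 ν, (P f : ℝ → ℝ) =ᵐ[ν] fun a => if h ≤ a then (f : ℝ → ℝ) a else 0)
    (hP₀ : ∀ f : Lp ℝ 2 ν, (P₀ f : ℝ → ℝ) =ᵐ[ν] fun a => if 0 ≤ a then (f : ℝ → ℝ) a else 0) :
    ‖P ∘L (D • Q) ∘L P‖ ≤
      ‖P₀ ∘L (D • Q) ∘L P₀‖ * Real.exp (-(h ^ 2 * (D - 1) ^ 2) / (2 * D)) := by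
  have hD0 : 0 < D := by linarith
  refine ContinuousLinearMap.opNorm_le_bound _ (by positivity) fun f => ?_
  have hae := sqrtDensity_mul_compression hD hν hQ hP f
  have hae₀ := sqrtDensity_mul_compression hD hν hQ hP₀
  subst hν
  set c := Real.exp (-(h ^ 2 * (D - 1) ^ 2) / (2 * D)) with hc
  have hf := (memLp_gaussianReal_iff hD).1 (Lp.memLp f)
  set F := (Set.Ici h).indicator fun y => sqrtDensity D y * f y with hF
  have hFL : MemLp F 2 := hf.indicator measurableSet_Ici
  have hF0 : ∀ t < 0, F (t + h) = 0 := fun t ht =>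
    Set.indicator_of_notMem (by simpa using ht) _
  have hGL : MemLp (fun t => |F (t + h)|) 2 :=
    (hFL.comp_measurePreserving (measurePreserving_add_right volume h)).abs
  have hrg : ∀ t, sqrtDensity D t * (|F (t + h)| / sqrtDensity D t) = |F (t + h)| := fun t =>
    mul_div_cancel₀ _ (sqrtDensity_pos hD t).ne'
  have hgL : MemLp (fun t => |F (t + h)| / sqrtDensity D t) 2
      (gaussianReal 0 (Real.toNNReal (D / (D ^ 2 - 1)))) := by
    rw [memLp_gaussianReal_iff hD]
    simpa only [hrg] using hGL
  set g := hgL.toLp _ with hg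
  have hga : (fun t => sqrtDensity D t * g t) =ᵐ[volume] fun t => |F (t + h)| := by
    filter_upwards [(gaussianReal_absolutelyContinuous' 0
      (toNNReal_variance_ne_zero hD)).ae_eq hgL.coeFn_toLp] with t ht
    rw [hg, ht, hrg]
  have hgn : ‖g‖ ≤ ‖f‖ := by
    refine le_of_sq_le_sq ?_ (by positivity)
    rw [norm_sq_eq_integral_of_ae_eq hD hga, norm_sq_eq_integral hD]
    simp only [sq_abs]
    rw [integral_add_right_eq_self (fun x => F x ^ 2)]
    exact integral_sq_indicator_le hf
  have hTg : (fun a => sqrtDensity D a * (P₀ ∘L (D • Q) ∘L P₀) g a) =ᵐ[volume]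
      (Set.Ici 0).indicator fun a => D * ∫ y, symmKernel D a y * |F (y + h)| := by
    refine (hae₀ g).trans (.of_forall fun a => ?_)
    simp only [Set.indicator_apply]
    congr 2
    refine integral_congr_ae (hga.mono fun y hy => ?_)
    simp only [Set.mem_Ici] at hy ⊢
    split_ifs with hy0
    · rw [hy]
    · simp [hF0 y (not_le.1 hy0)]
  have hTgi : Integrable (fun a => ((Set.Ici 0).indicator
      (fun a => D * ∫ y, symmKernel D a y * |F (y + h)|) a) ^ 2) :=
    (((memLp_gaussianReal_iff hD).1 (Lp.memLp _)).ae_eq hTg).integrable_sq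
  have hpt : ∀ s, 0 ≤ s → |∫ y, symmKernel D (s + h) y * F y| ≤
      c * ∫ y, symmKernel D s y * |F (y + h)| := by
    intro s hs
    rw [← integral_add_right_eq_self _ h, ← integral_const_mul]
    refine (abs_integral_le_integral_abs).trans ?_
    refine integral_mono_of_nonneg (.of_forall fun x => abs_nonneg _)
      (((memLp_symmKernel hD s).integrable_mul hGL).const_mul _) (.of_forall fun t => ?_)
    simp only [abs_mul, abs_of_nonneg (symmKernel_nonneg _ _ _)]
    rcases lt_or_ge t 0 with ht | ht
    · simp [hF0 t ht]
    · rw [← mul_assoc]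
      exact mul_le_mul_of_nonneg_right (symmKernel_add_le hD hh hs ht) (abs_nonneg _)
  have hmain : ‖(P ∘L (D • Q) ∘L P) f‖ ≤ c * ‖(P₀ ∘L (D • Q) ∘L P₀) g‖ := by
    refine le_of_sq_le_sq ?_ (by positivity)
    rw [mul_pow, norm_sq_eq_integral_of_ae_eq hD hae, norm_sq_eq_integral_of_ae_eq hD hTg,
      ← integral_add_right_eq_self _ h, ← integral_const_mul]
    refine integral_mono_of_nonneg (.of_forall fun x => sq_nonneg _) (hTgi.const_mul _)
      (.of_forall fun s => ?_)
    simp only [Set.indicator_apply, Set.mem_Ici, le_add_iff_nonneg_left]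
    split_ifs with hs
    · rw [← mul_pow, ← sq_abs, abs_mul, abs_of_pos hD0, mul_left_comm]
      gcongr
      exact hpt s hs
    · simp
  calc _ ≤ c * (‖P₀ ∘L (D • Q) ∘L P₀‖ * ‖f‖) := hmain.trans <| by
        gcongr
        exact (ContinuousLinearMap.le_opNorm _ _).trans (by gcongr)
    _ = _ := by ring

/-- For all h ≥ 0 and d ≥ 2,
λ_h ≤ λ_0·exp(-h²(d-1)²/(2d)) < d·exp(-h²(d-1)²/(2d)), where
λ_h = ‖π_h(dQ_{log d})π_h‖ on L²(N(0, d/(d²-1))). -/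
theorem stmt_18 (d : ℕ) (hd : 2 ≤ d)
    (ν : Measure ℝ) (hν : ν = gaussianReal 0 (Real.toNNReal ((d : ℝ) / ((d : ℝ) ^ 2 - 1))))
    (Q : Lp ℝ 2 ν →L[ℝ] Lp ℝ 2 ν)
    (hQ : ∀ f : Lp ℝ 2 ν, (Q f : ℝ → ℝ) =ᵐ[ν]
      fun a => ∫ y, (f : ℝ → ℝ) (a / d + Real.sqrt (1 - 1 / (d : ℝ) ^ 2) * y) ∂ν)
    (Ph : ℝ → (Lp ℝ 2 ν →L[ℝ] Lp ℝ 2 ν))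
    (hPh : ∀ (h : ℝ) (f : Lp ℝ 2 ν), (Ph h f : ℝ → ℝ) =ᵐ[ν]
      fun a => if h ≤ a then (f : ℝ → ℝ) a else 0)
    (lam : ℝ → ℝ) (hlam : ∀ h : ℝ, lam h = ‖Ph h ∘L ((d : ℝ) • Q) ∘L Ph h‖) :
    ∀ h : ℝ, 0 ≤ h →
      lam h ≤ lam 0 * Real.exp (-(h ^ 2 * ((d : ℝ) - 1) ^ 2) / (2 * d)) ∧
      lam 0 * Real.exp (-(h ^ 2 * ((d : ℝ) - 1) ^ 2) / (2 * d)) <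
        (d : ℝ) * Real.exp (-(h ^ 2 * ((d : ℝ) - 1) ^ 2) / (2 * d)) := by
  intro h hh
  have hd2 : (2 : ℝ) ≤ d := by exact_mod_cast hd
  rw [hlam h, hlam 0]
  exact ⟨norm_compression_le (by linarith) hν hQ hh (hPh h) (hPh 0),
    mul_lt_mul_of_pos_right (norm_compression_zero_lt hd2 hν hQ (hPh 0)) (Real.exp_pos _)⟩
end
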